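/- For every set X and every X-computable 2-bounded weakly rainbow-stable coloring f : [ℕ]² → ℕ, there exists an infinite rainbow for f that is low over X, i.e. an infinite set R ⊆ ℕ with f injective on [R]² and (R ⊕ X)′ ≤_T X′. -/

import Mathlib

/-! Call `x` and `y` equivalent if `f x s = f y s` for almost all `s`. By 2-boundedness a class has
at most two elements, and weak rainbow-stability makes both equivalence and inequivalence Σ⁰₂(X), so
equivalence is decidable from `X′`. A finite rainbow `ρ` without two equivalent elements remains a
rainbow after adding almost any `s`, and at most `|ρ|` choices of `s` create an equivalent pair.
Thus the set `B0` of strings with an equivalent pair is 1-closed, in the sense that it contains each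
`ρ` having at least `1 * (|ρ| + 1)` one-element extensions in it (`closed_B0`, `eventually_RT`).

The rainbow is a limit of strings `σ₀ ⊂ σ₁ ⊂ ⋯` avoiding a growing set of bad strings, which starts
as `B0` and is `2 ^ e`-closed before step `e`. At step `e`, let `C` be the set of strings that force
the `e`-th computation to halt. If `C` is `2 ^ e`-big above `σₑ` (there is a finite tree above `σₑ`
with leaves in `C` and all other nodes having enough children), then some extension of `σₑ` is in
`C` and not bad (`Big.exists_not`), and it is chosen. Otherwise the strings above which `C` is
`2 ^ e`-big form a `2 ^ e`-closed set (`closed_big`) omitting `σₑ`; it is added to the bad strings,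
which are now `2 ^ (e + 1)`-closed (`Closed.or`), and no later string forces halting. So the
construction decides the jump of the rainbow joined with `X` (`mem_jump_iff`).

Bigness is Σ⁰₁(X), because trees are finite, hence decidable from `X′`, and so is the relation
between successive states (`D1_Step`). Always taking the least admissible step gives a sequence
computable from `X′` (`S1_seq`). Σ⁰₁(Y) is encoded as the existence of a finite prefix of `Y` passing
a primitive recursive test; `jump_normal_form`, `S1.reduce`, `setLEset_of_D1` and `S1_of_RecIn`
connect this to oracle codes, by translating an oracle code and a finite table of oracle values into
an ordinary code, whose bounded evaluation is primitive recursive. -/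

open Classical Filter

noncomputable section

/-- Codes for partial functions recursive in an oracle. -/
inductive OCode : Type
  | zero | succ | left | right | oracle
  | pair (a b : OCode) | comp (a b : OCode) | prec (a b : OCode) | rfind' (a : OCode)

/-- Evaluation of an oracle code with oracle `O`. -/
def OCode.eval (O : ℕ →. ℕ) : OCode → ℕ →. ℕ
  | .zero => pure 0
  | .succ => Nat.succ
  | .left => ↑fun n : ℕ => n.unpair.1
  | .right => ↑fun n : ℕ => n.unpair.2
  | .oracle => O
  | .pair a b => fun n => Nat.pair <$> a.eval O n <*> b.eval O n
  | .comp a b => fun n => b.eval O n >>= a.eval O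
  | .prec a b => Nat.unpaired fun m n =>
      n.rec (a.eval O m) fun y IH => do let i ← IH; b.eval O (Nat.pair m (Nat.pair y i))
  | .rfind' a => fun n => Nat.rfind fun m => (fun k => k = 0) <$> a.eval O (Nat.pair n m)

/-- An injective numbering of oracle codes. -/
def OCode.encodeC : OCode → ℕ
  | .zero => Nat.pair 0 0
  | .succ => Nat.pair 1 0
  | .left => Nat.pair 2 0
  | .right => Nat.pair 3 0
  | .oracle => Nat.pair 4 0
  | .pair a b => Nat.pair 5 (Nat.pair a.encodeC b.encodeC)
  | .comp a b => Nat.pair 6 (Nat.pair a.encodeC b.encodeC)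
  | .prec a b => Nat.pair 7 (Nat.pair a.encodeC b.encodeC)
  | .rfind' a => Nat.pair 8 a.encodeC

/-- `f` is partial recursive in the oracle `O`. -/
def RecIn (O : ℕ →. ℕ) (f : ℕ →. ℕ) : Prop := ∃ c : OCode, c.eval O = f

/-- The `e`-th partial function recursive in `O` (`Φ_e^O`). -/
def phi (O : ℕ →. ℕ) (e : ℕ) : ℕ →. ℕ :=
  if h : ∃ c : OCode, c.encodeC = e then h.choose.eval O else fun _ => Part.none

/-- The characteristic function of a set of naturals, as an oracle. -/
def chOracle (X : Set ℕ) : ℕ →. ℕ := fun n => Part.some (if n ∈ X then 1 else 0)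

/-- A total function as an oracle. -/
def fnOracle (f : ℕ → ℕ) : ℕ →. ℕ := fun n => Part.some (f n)

/-- A two-variable total function as an oracle. -/
def pairFnOracle (f : ℕ → ℕ → ℕ) : ℕ →. ℕ :=
  fun n => Part.some (f n.unpair.1 n.unpair.2)

/-- The Turing jump of a set `X` : the halting problem relative to `X`. -/
def jumpSet (X : Set ℕ) : Set ℕ := {e | (phi (chOracle X) e e).Dom}

/-- The effective join of two sets of naturals. -/
def joinSet (A B : Set ℕ) : Set ℕ :=
  {n | (n % 2 = 0 ∧ n / 2 ∈ A) ∨ (n % 2 = 1 ∧ n / 2 ∈ B)}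

/-- The join of two oracles. -/
def joinO (O₁ O₂ : ℕ →. ℕ) : ℕ →. ℕ :=
  fun n => if n % 2 = 0 then O₁ (n / 2) else O₂ (n / 2)

/-- Turing reducibility between sets of naturals. -/
def setLEset (A B : Set ℕ) : Prop :=
  RecIn (chOracle B) (fnOracle fun n => if n ∈ A then 1 else 0)

/-! ### Automation for primitive recursive functions and predicates -/

attribute [fun_prop] Primrec PrimrecPred
attribute [fun_prop] Primrec.id Primrec.const Primrec.comp
attribute [fun_prop] PrimrecPred.and PrimrecPred.or PrimrecPred.not PrimrecPred.comp

namespace Rainbow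

section Prim

variable {α β γ δ : Type*} [Primcodable α] [Primcodable β] [Primcodable γ] [Primcodable δ]

@[fun_prop] theorem pr_pair {f : α → β} {g : α → γ} (hf : Primrec f) (hg : Primrec g) :
    Primrec fun a => (f a, g a) := hf.pair hg

@[fun_prop] theorem pr_fst {f : α → β × γ} (hf : Primrec f) : Primrec fun a => (f a).1 :=
  Primrec.fst.comp hf

@[fun_prop] theorem pr_snd {f : α → β × γ} (hf : Primrec f) : Primrec fun a => (f a).2 :=
  Primrec.snd.comp hf

@[fun_prop] theorem pr_succ {f : α → ℕ} (hf : Primrec f) : Primrec fun a => Nat.succ (f a) :=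
  Primrec.succ.comp hf

@[fun_prop] theorem pr_add {f g : α → ℕ} (hf : Primrec f) (hg : Primrec g) :
    Primrec fun a => f a + g a := Primrec.nat_add.comp hf hg

@[fun_prop] theorem pr_mul {f g : α → ℕ} (hf : Primrec f) (hg : Primrec g) :
    Primrec fun a => f a * g a := Primrec.nat_mul.comp hf hg

@[fun_prop] theorem pr_div {f g : α → ℕ} (hf : Primrec f) (hg : Primrec g) :
    Primrec fun a => f a / g a := Primrec.nat_div.comp hf hg

@[fun_prop] theorem pr_mod {f g : α → ℕ} (hf : Primrec f) (hg : Primrec g) :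
    Primrec fun a => f a % g a := Primrec.nat_mod.comp hf hg

@[fun_prop] theorem pr_npair {f g : α → ℕ} (hf : Primrec f) (hg : Primrec g) :
    Primrec fun a => Nat.pair (f a) (g a) := Primrec₂.natPair.comp hf hg

@[fun_prop] theorem pr_unpair {f : α → ℕ} (hf : Primrec f) :
    Primrec fun a => Nat.unpair (f a) := Primrec.unpair.comp hf

@[fun_prop] theorem pr_pow2 {f : α → ℕ} (hf : Primrec f) : Primrec fun a => 2 ^ f a := by
  have h : Primrec fun n : ℕ => 2 ^ n :=
    (Primrec.nat_rec₁ (f := fun _ y => 2 * y) 1 (by unfold Primrec₂; fun_prop)).of_eq fun n => by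
      induction n with
      | zero => rfl
      | succ n ih => simp only [ih, pow_succ]; ring
  exact h.comp hf

@[fun_prop] theorem pr_encode {f : α → β} (hf : Primrec f) :
    Primrec fun a => Encodable.encode (f a) := Primrec.encode.comp hf

@[fun_prop] theorem pr_decode {f : α → ℕ} (hf : Primrec f) :
    Primrec fun a => (Encodable.decode (f a) : Option β) := Primrec.decode.comp hf

@[fun_prop] theorem pr_some {f : α → β} (hf : Primrec f) :
    Primrec fun a => some (f a) := Primrec.option_some.comp hf

@[fun_prop] theorem pr_cons {f : α → β} {g : α → List β} (hf : Primrec f) (hg : Primrec g) :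
    Primrec fun a => f a :: g a := Primrec.list_cons.comp hf hg

@[fun_prop] theorem pr_append {f g : α → List β} (hf : Primrec f) (hg : Primrec g) :
    Primrec fun a => f a ++ g a := Primrec.list_append.comp hf hg

@[fun_prop] theorem pr_length {f : α → List β} (hf : Primrec f) :
    Primrec fun a => (f a).length := Primrec.list_length.comp hf

@[fun_prop] theorem pr_headI {f : α → List ℕ} (hf : Primrec f) :
    Primrec fun a => (f a).headI := Primrec.list_headI.comp hf

@[fun_prop] theorem pr_take {f : α → ℕ} {g : α → List β} (hf : Primrec f) (hg : Primrec g) :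
    Primrec fun a => (g a).take (f a) := Primrec.list_take.comp hf hg

@[fun_prop] theorem pr_drop {f : α → ℕ} {g : α → List β} (hf : Primrec f) (hg : Primrec g) :
    Primrec fun a => (g a).drop (f a) := Primrec.list_drop.comp hf hg

@[fun_prop] theorem pr_range {f : α → ℕ} (hf : Primrec f) :
    Primrec fun a => List.range (f a) := Primrec.list_range.comp hf

@[fun_prop] theorem pr_get {f : α → List β} {g : α → ℕ} (hf : Primrec f) (hg : Primrec g) :
    Primrec fun a => (f a)[g a]? := Primrec.list_getElem?.comp hf hg

@[fun_prop] theorem pr_map {f : α → List β} {g : α → β → γ} (hf : Primrec f)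
    (hg : Primrec fun p : α × β => g p.1 p.2) : Primrec fun a => (f a).map (g a) :=
  Primrec.list_map hf hg

@[fun_prop] theorem pr_map' {f : α → List β} {g : α → β → γ} (hf : Primrec f)
    (hg : Primrec fun p : α × β => g p.1 p.2) : Primrec fun a => (f a).map (fun b => g a b) :=
  Primrec.list_map hf hg

@[fun_prop] theorem pr_omap {f : α → Option β} {g : α → β → γ} (hf : Primrec f)
    (hg : Primrec fun p : α × β => g p.1 p.2) : Primrec fun a => (f a).map (fun b => g a b) :=
  Primrec.option_map hf hg

@[fun_prop] theorem pr_obind {f : α → Option β} {g : α → β → Option γ} (hf : Primrec f)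
    (hg : Primrec fun p : α × β => g p.1 p.2) : Primrec fun a => (f a).bind (fun b => g a b) :=
  Primrec.option_bind hf hg

@[fun_prop] theorem pr_isSome {f : α → Option β} (hf : Primrec f) :
    PrimrecPred fun a => (f a).isSome = true :=
  Primrec.eq.comp (Primrec.option_isSome.comp hf) (Primrec.const true)

@[fun_prop] theorem pr_toList {f : α → Option β} (hf : Primrec f) :
    Primrec fun a => (f a).toList := Primrec.optionToList.comp hf

@[fun_prop] theorem pr_ite {p : α → Prop} [DecidablePred p] {f g : α → β} (hp : PrimrecPred p)
    (hf : Primrec f) (hg : Primrec g) : Primrec fun a => if p a then f a else g a :=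
  Primrec.ite hp hf hg

@[fun_prop] theorem pr_eq {f g : α → β} (hf : Primrec f) (hg : Primrec g) :
    PrimrecPred fun a => f a = g a := Primrec.eq.comp hf hg

@[fun_prop] theorem pr_lt {f g : α → ℕ} (hf : Primrec f) (hg : Primrec g) :
    PrimrecPred fun a => f a < g a := Primrec.nat_lt.comp hf hg

@[fun_prop] theorem pr_le {f g : α → ℕ} (hf : Primrec f) (hg : Primrec g) :
    PrimrecPred fun a => f a ≤ g a := Primrec.nat_le.comp hf hg

@[fun_prop] theorem pr_bex {L : α → List β} {p : α → β → Prop} (hL : Primrec L)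
    (hp : PrimrecPred fun q : α × β => p q.1 q.2) : PrimrecPred fun a => ∃ b ∈ L a, p a b := by
  have h : PrimrecRel fun (b : β) (a : α) => p a b :=
    hp.comp (by fun_prop : Primrec fun q : β × α => (q.2, q.1))
  exact h.exists_mem_list.comp hL Primrec.id

@[fun_prop] theorem pr_ball {L : α → List β} {p : α → β → Prop} (hL : Primrec L)
    (hp : PrimrecPred fun q : α × β => p q.1 q.2) : PrimrecPred fun a => ∀ b ∈ L a, p a b := by
  have h : PrimrecRel fun (b : β) (a : α) => p a b :=
    hp.comp (by fun_prop : Primrec fun q : β × α => (q.2, q.1))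
  exact h.forall_mem_list.comp hL Primrec.id

@[fun_prop] theorem pr_mem {L : α → List β} {g : α → β} (hL : Primrec L) (hg : Primrec g) :
    PrimrecPred fun a => g a ∈ L a :=
  (show PrimrecPred fun a => ∃ b ∈ L a, b = g a by fun_prop).of_eq fun a => by simp

@[fun_prop] theorem pr_exlt {N : α → ℕ} {p : α → ℕ → Prop} (hN : Primrec N)
    (hp : PrimrecPred fun q : α × ℕ => p q.1 q.2) : PrimrecPred fun a => ∃ n < N a, p a n :=
  (show PrimrecPred fun a => ∃ n ∈ List.range (N a), p a n by fun_prop).of_eq fun a => by simp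

end Prim

/-! ### The use principle -/

open Nat.Partrec (Code)

/-- The length-`m` prefix of the characteristic function of `Y`. -/
def pre (Y : Set ℕ) (m : ℕ) : List ℕ := (List.range m).map fun i => if i ∈ Y then 1 else 0

/-- A finite list of values, read as a partial oracle undefined beyond its length. -/
def tab (σ : List ℕ) : ℕ →. ℕ := fun n => (σ[n]? : Option ℕ)

theorem length_pre (Y : Set ℕ) (m : ℕ) : (pre Y m).length = m := by simp [pre]

theorem pre_getElem? (Y : Set ℕ) (m n : ℕ) :
    (pre Y m)[n]? = if n < m then some (if n ∈ Y then 1 else 0) else none := by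
  by_cases h : n < m <;> simp [pre, h]

theorem pre_take (Y : Set ℕ) {k m : ℕ} (h : k ≤ m) : (pre Y m).take k = pre Y k := by
  simp only [pre, ← List.map_take, List.take_range, min_eq_left h]

theorem mem_tab_pre {Y : Set ℕ} {m n v : ℕ} :
    v ∈ tab (pre Y m) n ↔ n < m ∧ v ∈ chOracle Y n := by
  simp only [tab, pre_getElem?, chOracle]
  by_cases h : n < m <;> simp [h]

section
variable {O : ℕ →. ℕ} {a b : OCode} {n m k v : ℕ}

theorem mem_eval_pair : v ∈ (OCode.pair a b).eval O n ↔
    ∃ x ∈ a.eval O n, ∃ y ∈ b.eval O n, Nat.pair x y = v := by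
  simp only [OCode.eval, Seq.seq, Part.map_eq_map, Part.mem_bind_iff, Part.mem_map_iff]
  exact ⟨fun ⟨_, ⟨x, hx, e⟩, y, hy, h⟩ => ⟨x, hx, y, hy, e ▸ h⟩,
    fun ⟨x, hx, y, hy, h⟩ => ⟨_, ⟨x, hx, rfl⟩, y, hy, h⟩⟩

theorem mem_eval_comp : v ∈ (OCode.comp a b).eval O n ↔ ∃ x ∈ b.eval O n, v ∈ a.eval O x :=
  Part.mem_bind_iff

theorem eval_prec_zero :
    (OCode.prec a b).eval O (Nat.pair m 0) = a.eval O m := by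
  simp only [OCode.eval, Nat.unpaired, Nat.unpair_pair]
  rfl

theorem mem_eval_prec_succ : v ∈ (OCode.prec a b).eval O (Nat.pair m (k + 1)) ↔
    ∃ x ∈ (OCode.prec a b).eval O (Nat.pair m k),
      v ∈ b.eval O (Nat.pair m (Nat.pair k x)) := by
  simp only [OCode.eval, Nat.unpaired, Nat.unpair_pair]
  exact Part.mem_bind_iff

theorem mem_eval_rfind : v ∈ (OCode.rfind' a).eval O n ↔
    0 ∈ a.eval O (Nat.pair n v) ∧ ∀ j < v, ∃ y ∈ a.eval O (Nat.pair n j), y ≠ 0 := by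
  refine Nat.mem_rfind.trans (and_congr ?_ (forall_congr' fun j => forall_congr' fun _ => ?_))
  all_goals exact (Part.mem_map_iff _).trans (by simp)

end

/-- Evaluation is monotone in the oracle. -/
theorem eval_mono {O O' : ℕ →. ℕ} (h : ∀ n v, v ∈ O n → v ∈ O' n) (c : OCode) :
    ∀ n v, v ∈ c.eval O n → v ∈ c.eval O' n := by
  induction c with
  | zero | succ | left | right => exact fun n v hv => hv
  | oracle => exact h
  | pair a b iha ihb =>
    intro n v hv
    rw [mem_eval_pair] at *
    obtain ⟨x, hx, y, hy, rfl⟩ := hv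
    exact ⟨x, iha _ _ hx, y, ihb _ _ hy, rfl⟩
  | comp a b iha ihb =>
    intro n v hv
    rw [mem_eval_comp] at *
    obtain ⟨x, hx, hv⟩ := hv
    exact ⟨x, ihb _ _ hx, iha _ _ hv⟩
  | prec a b iha ihb =>
    intro n
    rw [← Nat.pair_unpair n]
    generalize n.unpair.2 = k
    induction k with
    | zero => intro v hv; rw [eval_prec_zero] at *; exact iha _ _ hv
    | succ k ih =>
      intro v hv
      rw [mem_eval_prec_succ] at *
      obtain ⟨x, hx, hv⟩ := hv
      exact ⟨x, ih _ hx, ihb _ _ hv⟩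
  | rfind' a iha =>
    intro n v hv
    rw [mem_eval_rfind] at *
    refine ⟨iha _ _ hv.1, fun j hj => ?_⟩
    obtain ⟨y, hy, h1⟩ := hv.2 j hj
    exact ⟨y, iha _ _ hy, h1⟩

theorem eval_pre_mono {Y : Set ℕ} {m m' : ℕ} (h : m ≤ m') (c : OCode) {n v : ℕ}
    (hv : v ∈ c.eval (tab (pre Y m)) n) : v ∈ c.eval (tab (pre Y m')) n :=
  eval_mono (fun n v hv => by rw [mem_tab_pre] at *; exact ⟨by omega, hv.2⟩) c n v hv

/-- A convergent computation only uses a finite prefix of its oracle. -/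
theorem eval_compact {Y : Set ℕ} (c : OCode) :
    ∀ n v, v ∈ c.eval (chOracle Y) n → ∃ m, v ∈ c.eval (tab (pre Y m)) n := by
  induction c with
  | zero | succ | left | right => exact fun n v hv => ⟨0, hv⟩
  | oracle => exact fun n v hv => ⟨n + 1, mem_tab_pre.2 ⟨by omega, hv⟩⟩
  | pair a b iha ihb =>
    intro n v hv
    simp only [mem_eval_pair] at *
    obtain ⟨x, hx, y, hy, rfl⟩ := hv
    obtain ⟨m₁, h₁⟩ := iha _ _ hx
    obtain ⟨m₂, h₂⟩ := ihb _ _ hy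
    exact ⟨max m₁ m₂, x, eval_pre_mono (le_max_left _ _) _ h₁, y,
      eval_pre_mono (le_max_right _ _) _ h₂, rfl⟩
  | comp a b iha ihb =>
    intro n v hv
    simp only [mem_eval_comp] at *
    obtain ⟨x, hx, hv⟩ := hv
    obtain ⟨m₁, h₁⟩ := ihb _ _ hx
    obtain ⟨m₂, h₂⟩ := iha _ _ hv
    exact ⟨max m₁ m₂, x, eval_pre_mono (le_max_left _ _) _ h₁,
      eval_pre_mono (le_max_right _ _) _ h₂⟩
  | prec a b iha ihb =>
    intro n
    rw [← Nat.pair_unpair n]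
    generalize n.unpair.2 = k
    induction k with
    | zero => intro v hv; simp only [eval_prec_zero] at *; exact iha _ _ hv
    | succ k ih =>
      intro v hv
      simp only [mem_eval_prec_succ] at *
      obtain ⟨x, hx, hv⟩ := hv
      obtain ⟨m₁, h₁⟩ := ih _ hx
      obtain ⟨m₂, h₂⟩ := ihb _ _ hv
      exact ⟨max m₁ m₂, x, eval_pre_mono (le_max_left _ _) _ h₁,
        eval_pre_mono (le_max_right _ _) _ h₂⟩
  | rfind' a iha =>
    intro n v hv
    simp only [mem_eval_rfind] at *
    obtain ⟨m₁, h₁⟩ := iha _ _ hv.1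
    -- One prefix serves all the finitely many values tested before the search stops.
    have key : ∀ k ≤ v, ∃ m, ∀ j < k, ∃ y ∈ a.eval (tab (pre Y m)) (Nat.pair n j), y ≠ 0 := by
      intro k
      induction k with
      | zero => exact fun _ => ⟨0, fun j hj => absurd hj (by omega)⟩
      | succ k ih =>
        intro hk
        obtain ⟨m, hm⟩ := ih (by omega)
        obtain ⟨y, hy, h1⟩ := hv.2 k (by omega)
        obtain ⟨m', hm'⟩ := iha _ _ hy
        refine ⟨max m m', fun j hj => ?_⟩
        rcases Nat.lt_succ_iff_lt_or_eq.1 hj with hj | rfl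
        · obtain ⟨z, hz, h2⟩ := hm j hj
          exact ⟨z, eval_pre_mono (le_max_left _ _) _ hz, h2⟩
        · exact ⟨y, eval_pre_mono (le_max_right _ _) _ hm', h1⟩
    obtain ⟨m₂, h₂⟩ := key v le_rfl
    refine ⟨max m₁ m₂, eval_pre_mono (le_max_left _ _) _ h₁, fun j hj => ?_⟩
    obtain ⟨y, hy, h1⟩ := h₂ j hj
    exact ⟨y, eval_pre_mono (le_max_right _ _) _ hy, h1⟩

theorem mem_eval_iff {Y : Set ℕ} {c : OCode} {n v : ℕ} :
    v ∈ c.eval (chOracle Y) n ↔ ∃ m, v ∈ c.eval (tab (pre Y m)) n :=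
  ⟨eval_compact c n v, fun ⟨_, h⟩ =>
    eval_mono (fun _ _ hv => (mem_tab_pre.1 hv).2) c n v h⟩

/-! ### Arithmetization of oracle codes -/

theorem encodeC_injective : Function.Injective OCode.encodeC := by
  intro c
  induction c with
  | zero | succ | left | right | oracle =>
    intro d h; cases d <;> simp [OCode.encodeC, Nat.pair_eq_pair] at h ⊢
  | pair a b iha ihb | comp a b iha ihb | prec a b iha ihb =>
    intro d h; cases d <;> simp [OCode.encodeC, Nat.pair_eq_pair] at h ⊢
    exact ⟨iha h.1, ihb h.2⟩
  | rfind' a iha =>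
    intro d h; cases d <;> simp [OCode.encodeC, Nat.pair_eq_pair] at h ⊢
    exact iha h

theorem mem_phi {O : ℕ →. ℕ} {e n v : ℕ} :
    v ∈ phi O e n ↔ ∃ c : OCode, c.encodeC = e ∧ v ∈ c.eval O n := by
  by_cases h : ∃ c : OCode, c.encodeC = e
  · rw [show phi O e = h.choose.eval O from dif_pos h]
    refine ⟨fun hv => ⟨_, h.choose_spec, hv⟩, ?_⟩
    rintro ⟨c, hc, hv⟩
    rwa [encodeC_injective (h.choose_spec.trans hc.symm)]
  · rw [show phi O e = fun _ => Part.none from dif_neg h]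
    exact ⟨fun hv => absurd hv (Part.notMem_none _), fun ⟨c, hc, _⟩ => absurd ⟨c, hc⟩ h⟩

theorem mem_jumpSet {Y : Set ℕ} {e : ℕ} :
    e ∈ jumpSet Y ↔ ∃ c : OCode, c.encodeC = e ∧ (c.eval (chOracle Y) e).Dom := by
  simp only [jumpSet, Set.mem_ofPred_eq, Part.dom_iff_mem, mem_phi]
  exact ⟨fun ⟨v, c, h, hv⟩ => ⟨c, h, v, hv⟩, fun ⟨c, h, v, hv⟩ => ⟨v, c, h, hv⟩⟩

/-- An oracle-free code, uniformly in `σ`, for the partial oracle `tab σ`. -/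
theorem exists_lookup : ∃ L : Code, ∀ (σ : List ℕ) n,
    L.eval (Nat.pair (Encodable.encode σ) n) = tab σ n := by
  have h : Partrec fun k : ℕ =>
      (((Encodable.decode k.unpair.1 : Option (List ℕ)).bind fun σ => σ[k.unpair.2]? : Option ℕ) :
        Part ℕ) :=
    Computable.ofOption (Primrec.to_comp (by fun_prop))
  obtain ⟨L, hL⟩ := Nat.Partrec.Code.exists_code.1 (Partrec.nat_iff.1 h)
  exact ⟨L, fun σ n => by simp [hL, tab]⟩

/-- A code for reading a given entry of a given finite list. -/
def lookupCode : Code := exists_lookup.choose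

/-- Replace the oracle of an oracle code by the finite table `σ`. -/
def transC (σ : List ℕ) : OCode → Code
  | .zero => .zero
  | .succ => .succ
  | .left => .left
  | .right => .right
  | .oracle => lookupCode.curry (Encodable.encode σ)
  | .pair a b => .pair (transC σ a) (transC σ b)
  | .comp a b => .comp (transC σ a) (transC σ b)
  | .prec a b => .prec (transC σ a) (transC σ b)
  | .rfind' a => .comp (.rfind' (transC σ a)) (.pair Code.id .zero)

theorem eval_transC (σ : List ℕ) (c : OCode) : (transC σ c).eval = c.eval (tab σ) := by
  induction c with
  | zero | succ | left | right => rfl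
  | oracle =>
    funext n
    simp only [transC, Nat.Partrec.Code.eval_curry, OCode.eval]
    exact exists_lookup.choose_spec σ n
  | pair a b iha ihb => simp only [transC, Nat.Partrec.Code.eval, OCode.eval, iha, ihb]; rfl
  | comp a b iha ihb => simp only [transC, Nat.Partrec.Code.eval, OCode.eval, iha, ihb]; rfl
  | prec a b iha ihb => simp only [transC, Nat.Partrec.Code.eval, OCode.eval, iha, ihb]; rfl
  | rfind' a iha =>
    funext n
    -- `Code.rfind'` starts its search at a given value; here that value is `0`.
    have h0 : (Code.pair Code.id Code.zero).eval n = Part.some (Nat.pair n 0) := by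
      simp [Nat.Partrec.Code.eval, Seq.seq, pure, PFun.pure]
    have h1 : (transC σ a.rfind').eval n = (Code.rfind' (transC σ a)).eval (Nat.pair n 0) := by
      change ((Code.pair Code.id Code.zero).eval n).bind _ = _
      rw [h0]
      exact Part.bind_some _ _
    rw [h1]
    simp only [Nat.Partrec.Code.eval, OCode.eval, iha, Nat.unpaired, Nat.unpair_pair, add_zero]
    exact Part.map_id' (fun _ => rfl) _

theorem unpair2_lt {e : ℕ} (h : 5 ≤ e.unpair.1) : e.unpair.2 < e := by
  have := Nat.unpair_add_le e; omega

/-- The oracle code with a given number, if there is one. -/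
def dec (e : ℕ) : Option OCode :=
  if e = Nat.pair 0 0 then some .zero
  else if e = Nat.pair 1 0 then some .succ
  else if e = Nat.pair 2 0 then some .left
  else if e = Nat.pair 3 0 then some .right
  else if e = Nat.pair 4 0 then some .oracle
  else if _h : e.unpair.1 = 5 then
    (dec e.unpair.2.unpair.1).bind fun a => (dec e.unpair.2.unpair.2).map fun b => .pair a b
  else if _h : e.unpair.1 = 6 then
    (dec e.unpair.2.unpair.1).bind fun a => (dec e.unpair.2.unpair.2).map fun b => .comp a b
  else if _h : e.unpair.1 = 7 then
    (dec e.unpair.2.unpair.1).bind fun a => (dec e.unpair.2.unpair.2).map fun b => .prec a b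
  else if _h : e.unpair.1 = 8 then (dec e.unpair.2).map fun a => .rfind' a
  else none
termination_by e
decreasing_by
  all_goals
    have h1 := unpair2_lt (e := e) (by omega)
    have h2 := Nat.unpair_left_le e.unpair.2
    have h3 := Nat.unpair_right_le e.unpair.2
    omega

theorem dec_encodeC (c : OCode) : dec c.encodeC = some c := by
  induction c with
  | zero | succ | left | right | oracle => rw [dec]; simp [OCode.encodeC, Nat.pair_eq_pair]
  | pair a b iha ihb | comp a b iha ihb | prec a b iha ihb =>
    rw [dec]; simp [OCode.encodeC, Nat.pair_eq_pair, iha, ihb]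
  | rfind' a iha => rw [dec]; simp [OCode.encodeC, Nat.pair_eq_pair, iha]

theorem encodeC_of_dec : ∀ (e : ℕ) (c : OCode), dec e = some c → c.encodeC = e := by
  intro e
  induction e using Nat.strong_induction_on with
  | _ e ih =>
    intro c h
    have h2 := Nat.unpair_left_le e.unpair.2
    have h3 := Nat.unpair_right_le e.unpair.2
    rw [dec] at h
    split_ifs at h with g0 g1 g2 g3 g4 g5 g6 g7 g8
    any_goals (cases h; simp [OCode.encodeC, *])
    any_goals
      have h1 := unpair2_lt (e := e) (by omega)
      simp only [Option.bind_eq_some_iff, Option.map_eq_some_iff] at h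
      obtain ⟨a, ha, b, hb, rfl⟩ := h
      rw [OCode.encodeC, ih _ (by omega) _ ha, ih _ (by omega) _ hb, Nat.pair_unpair]
      nth_rewrite 2 [← Nat.pair_unpair e]
      simp [*]
    have h1 := unpair2_lt (e := e) (by omega)
    simp only [Option.map_eq_some_iff] at h
    obtain ⟨a, ha, rfl⟩ := h
    rw [OCode.encodeC, ih _ (by omega) _ ha]
    nth_rewrite 2 [← Nat.pair_unpair e]
    simp [*]

/-- `trans σ e` is an oracle-free code for `Φ_e` run with the finite table `σ` as its oracle. -/
def trans (σ : List ℕ) (e : ℕ) : Option Code := (dec e).map (transC σ)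

/-- The course-of-values step computing `trans σ e` from the list `l` of its earlier values. -/
def transStep (σ : List ℕ) (l : List (Option Code)) (e : ℕ) : Option Code :=
  if e = Nat.pair 0 0 then some .zero
  else if e = Nat.pair 1 0 then some .succ
  else if e = Nat.pair 2 0 then some .left
  else if e = Nat.pair 3 0 then some .right
  else if e = Nat.pair 4 0 then some (lookupCode.curry (Encodable.encode σ))
  else if e.unpair.1 = 5 then
    ((l[e.unpair.2.unpair.1]?).bind fun o => o).bind fun a =>
      ((l[e.unpair.2.unpair.2]?).bind fun o => o).map fun b => .pair a b
  else if e.unpair.1 = 6 then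
    ((l[e.unpair.2.unpair.1]?).bind fun o => o).bind fun a =>
      ((l[e.unpair.2.unpair.2]?).bind fun o => o).map fun b => .comp a b
  else if e.unpair.1 = 7 then
    ((l[e.unpair.2.unpair.1]?).bind fun o => o).bind fun a =>
      ((l[e.unpair.2.unpair.2]?).bind fun o => o).map fun b => .prec a b
  else if e.unpair.1 = 8 then
    ((l[e.unpair.2]?).bind fun o => o).map fun a => .comp (.rfind' a) (.pair Code.id .zero)
  else none

section
variable {α : Type*} [Primcodable α] {f g : α → Code}
@[fun_prop] theorem pr_cpair (hf : Primrec f) (hg : Primrec g) :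
    Primrec fun a => Code.pair (f a) (g a) := Nat.Partrec.Code.primrec₂_pair.comp hf hg
@[fun_prop] theorem pr_ccomp (hf : Primrec f) (hg : Primrec g) :
    Primrec fun a => Code.comp (f a) (g a) := Nat.Partrec.Code.primrec₂_comp.comp hf hg
@[fun_prop] theorem pr_cprec (hf : Primrec f) (hg : Primrec g) :
    Primrec fun a => Code.prec (f a) (g a) := Nat.Partrec.Code.primrec₂_prec.comp hf hg
@[fun_prop] theorem pr_crfind (hf : Primrec f) :
    Primrec fun a => Code.rfind' (f a) := Nat.Partrec.Code.primrec_rfind'.comp hf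
@[fun_prop] theorem pr_ccurry {h : α → ℕ} (hf : Primrec f) (hh : Primrec h) :
    Primrec fun a => Code.curry (f a) (h a) := Nat.Partrec.Code.primrec₂_curry.comp hf hh
@[fun_prop] theorem pr_evaln {k n : α → ℕ} (hk : Primrec k) (hf : Primrec f) (hn : Primrec n) :
    Primrec fun a => Code.evaln (k a) (f a) (n a) :=
  Nat.Partrec.Code.primrec_evaln.comp (by fun_prop : Primrec fun a => ((k a, f a), n a))
end

theorem primrec_trans : Primrec₂ trans := by
  refine Primrec.nat_strong_rec trans (g := fun σ l => some (transStep σ l l.length)) ?_ ?_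
  · unfold Primrec₂ transStep
    fun_prop
  · intro σ e
    have h2 := Nat.unpair_left_le e.unpair.2
    have h3 := Nat.unpair_right_le e.unpair.2
    have hF : ∀ i, i < e →
        ((((List.range e).map (trans σ))[i]?).bind fun o => o) = trans σ i := by
      intro i hi; simp [hi]
    rw [Option.some_inj, List.length_map, List.length_range, trans, dec, transStep]
    by_cases g0 : e = Nat.pair 0 0
    · rw [if_pos g0, if_pos g0]; rfl
    rw [if_neg g0, if_neg g0]
    by_cases g1 : e = Nat.pair 1 0
    · rw [if_pos g1, if_pos g1]; rfl
    rw [if_neg g1, if_neg g1]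
    by_cases g2 : e = Nat.pair 2 0
    · rw [if_pos g2, if_pos g2]; rfl
    rw [if_neg g2, if_neg g2]
    by_cases g3 : e = Nat.pair 3 0
    · rw [if_pos g3, if_pos g3]; rfl
    rw [if_neg g3, if_neg g3]
    by_cases g4 : e = Nat.pair 4 0
    · rw [if_pos g4, if_pos g4]; rfl
    rw [if_neg g4, if_neg g4]
    by_cases g5 : e.unpair.1 = 5
    · have h1 := unpair2_lt (e := e) (by omega)
      rw [if_pos g5, dif_pos g5, hF _ (by omega), hF _ (by omega), trans, trans]
      cases dec e.unpair.2.unpair.1 <;> cases dec e.unpair.2.unpair.2 <;> rfl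
    rw [if_neg g5, dif_neg g5]
    by_cases g6 : e.unpair.1 = 6
    · have h1 := unpair2_lt (e := e) (by omega)
      rw [if_pos g6, dif_pos g6, hF _ (by omega), hF _ (by omega), trans, trans]
      cases dec e.unpair.2.unpair.1 <;> cases dec e.unpair.2.unpair.2 <;> rfl
    rw [if_neg g6, dif_neg g6]
    by_cases g7 : e.unpair.1 = 7
    · have h1 := unpair2_lt (e := e) (by omega)
      rw [if_pos g7, dif_pos g7, hF _ (by omega), hF _ (by omega), trans, trans]
      cases dec e.unpair.2.unpair.1 <;> cases dec e.unpair.2.unpair.2 <;> rfl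
    rw [if_neg g7, dif_neg g7]
    by_cases g8 : e.unpair.1 = 8
    · have h1 := unpair2_lt (e := e) (by omega)
      rw [if_pos g8, dif_pos g8, hF _ (by omega), trans]
      cases dec e.unpair.2 <;> rfl
    rw [if_neg g8, dif_neg g8]
    rfl

@[fun_prop] theorem pr_trans {α : Type*} [Primcodable α] {f : α → List ℕ} {g : α → ℕ}
    (hf : Primrec f) (hg : Primrec g) : Primrec fun a => trans (f a) (g a) :=
  primrec_trans.comp hf hg

/-- Kleene's normal form for the jump, uniformly in the oracle. -/
theorem jump_normal_form : ∃ D : ℕ × List ℕ → Prop, PrimrecPred D ∧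
    ∀ Y e, e ∈ jumpSet Y ↔ ∃ m, D (e, pre Y m) := by
  refine ⟨fun p => ∃ k < p.2.length + 1,
    ((trans (p.2.take k) p.1).bind fun c => Code.evaln p.2.length c p.1).isSome = true,
    by fun_prop, fun Y e => ?_⟩
  simp only [mem_jumpSet, Option.isSome_iff_exists, Option.bind_eq_some_iff, length_pre,
    Part.dom_iff_mem, mem_eval_iff, trans, Option.map_eq_some_iff]
  constructor
  · rintro ⟨c, rfl, v, m, hv⟩
    rw [← eval_transC, Nat.Partrec.Code.evaln_complete] at hv
    obtain ⟨k, hk⟩ := hv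
    refine ⟨max m k, m, by omega, v, _, ⟨c, dec_encodeC c, rfl⟩, ?_⟩
    rw [pre_take _ (le_max_left _ _)]
    exact Nat.Partrec.Code.evaln_mono (le_max_right _ _) hk
  · rintro ⟨m, k, hk, v, _, ⟨c, hc, rfl⟩, hv⟩
    rw [pre_take _ (by omega)] at hv
    refine ⟨c, encodeC_of_dec _ _ hc, v, k, ?_⟩
    rw [← eval_transC]
    exact Nat.Partrec.Code.evaln_sound hv

/-! ### Relativized Σ⁰₁ and Δ⁰₁ predicates -/

section Sigma

variable {α β : Type*} [Primcodable α] [Primcodable β] {Y : Set ℕ}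

/-- `P` is Σ⁰₁ relative to `Y`: it holds when some finite prefix of `Y` passes a primitive
recursive test. -/
def S1 (Y : Set ℕ) {α : Type*} [Primcodable α] (P : α → Prop) : Prop :=
  ∃ p : α × List ℕ → Prop, PrimrecPred p ∧ ∀ a, P a ↔ ∃ m, p (a, pre Y m)

/-- `P` is decidable relative to `Y`. -/
def D1 (Y : Set ℕ) {α : Type*} [Primcodable α] (P : α → Prop) : Prop :=
  S1 Y P ∧ S1 Y fun a => ¬ P a

theorem S1.of_iff {P Q : α → Prop} (hP : S1 Y P) (h : ∀ a, Q a ↔ P a) : S1 Y Q := by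
  obtain ⟨p, hp, hP⟩ := hP
  exact ⟨p, hp, fun a => (h a).trans (hP a)⟩

/-- The test in the definition of `S1` may be taken monotone in the prefix. -/
theorem S1.exists_mono {P : α → Prop} (hP : S1 Y P) : ∃ p : α × List ℕ → Prop, PrimrecPred p ∧
    (∀ a m m', m ≤ m' → p (a, pre Y m) → p (a, pre Y m')) ∧ ∀ a, P a ↔ ∃ m, p (a, pre Y m) := by
  obtain ⟨p, hp, hP⟩ := hP
  have key : ∀ a m, (∃ k < (pre Y m).length + 1, p (a, (pre Y m).take k)) ↔
      ∃ k ≤ m, p (a, pre Y k) := by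
    intro a m
    simp only [length_pre, Nat.lt_succ_iff]
    refine exists_congr fun k => and_congr_right fun hk => ?_
    rw [pre_take _ hk]
  refine ⟨fun q => ∃ k < q.2.length + 1, p (q.1, q.2.take k), by fun_prop, ?_, fun a => ?_⟩
  · intro a m m' h
    simp only [key]
    exact fun ⟨k, hk, h'⟩ => ⟨k, hk.trans h, h'⟩
  · simp only [key, hP]
    exact ⟨fun ⟨m, h⟩ => ⟨m, m, le_rfl, h⟩, fun ⟨_, k, _, h⟩ => ⟨k, h⟩⟩

theorem S1.of_primrec {P : α → Prop} (hP : PrimrecPred P) : S1 Y P :=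
  ⟨fun q => P q.1, by fun_prop, fun _ => ⟨fun h => ⟨0, h⟩, fun ⟨_, h⟩ => h⟩⟩

theorem S1.comp {P : β → Prop} {g : α → β} (hP : S1 Y P) (hg : Primrec g) :
    S1 Y fun a => P (g a) := by
  obtain ⟨p, hp, hP⟩ := hP
  exact ⟨fun q => p (g q.1, q.2), by fun_prop, fun a => hP (g a)⟩

theorem S1.and {P Q : α → Prop} (hP : S1 Y P) (hQ : S1 Y Q) : S1 Y fun a => P a ∧ Q a := by
  obtain ⟨p, hp, mp, hP⟩ := hP.exists_mono
  obtain ⟨q, hq, mq, hQ⟩ := hQ.exists_mono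
  refine ⟨fun x => p x ∧ q x, by fun_prop, fun a => ?_⟩
  show (P a ∧ Q a) ↔ ∃ m, p (a, pre Y m) ∧ q (a, pre Y m)
  rw [hP, hQ]
  exact ⟨fun ⟨⟨m, h⟩, n, h'⟩ => ⟨max m n, mp _ _ _ (le_max_left _ _) h,
    mq _ _ _ (le_max_right _ _) h'⟩, fun ⟨m, h⟩ => ⟨⟨m, h.1⟩, m, h.2⟩⟩

theorem S1.or {P Q : α → Prop} (hP : S1 Y P) (hQ : S1 Y Q) : S1 Y fun a => P a ∨ Q a := by
  obtain ⟨p, hp, hP⟩ := hP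
  obtain ⟨q, hq, hQ⟩ := hQ
  refine ⟨fun x => p x ∨ q x, by fun_prop, fun a => ?_⟩
  show (P a ∨ Q a) ↔ ∃ m, p (a, pre Y m) ∨ q (a, pre Y m)
  rw [hP, hQ, exists_or]

theorem S1.ex {P : α → β → Prop} (hP : S1 Y fun x : α × β => P x.1 x.2) :
    S1 Y fun a => ∃ b, P a b := by
  obtain ⟨p, hp, mp, hP⟩ := hP.exists_mono
  refine ⟨fun x => ∃ n < x.2.length, ∃ b ∈ (Encodable.decode n : Option β).toList,
    p ((x.1, b), x.2), ?_, fun a => ?_⟩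
  · fun_prop
  · simp only [length_pre, Option.mem_toList]
    constructor
    · rintro ⟨b, hb⟩
      obtain ⟨m, hm⟩ := (hP (a, b)).1 hb
      exact ⟨max m (Encodable.encode b + 1), Encodable.encode b, by omega, b,
        Encodable.encodek b, mp _ _ _ (le_max_left _ _) hm⟩
    · rintro ⟨m, n, -, b, -, h⟩
      exact ⟨b, (hP (a, b)).2 ⟨m, h⟩⟩

theorem S1.ball {P : α → β → Prop} {L : α → List β} (hP : S1 Y fun x : α × β => P x.1 x.2)
    (hL : Primrec L) : S1 Y fun a => ∀ b ∈ L a, P a b := by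
  obtain ⟨p, hp, mp, hP⟩ := hP.exists_mono
  refine ⟨fun x => ∀ b ∈ L x.1, p ((x.1, b), x.2), by fun_prop, fun a => ?_⟩
  show (∀ b ∈ L a, P a b) ↔ ∃ m, ∀ b ∈ L a, p ((a, b), pre Y m)
  generalize L a = l
  constructor
  · intro h
    induction l with
    | nil => exact ⟨0, by simp⟩
    | cons b l ih =>
      obtain ⟨m, hm⟩ := ih fun c hc => h c (List.mem_cons_of_mem _ hc)
      obtain ⟨n, hn⟩ := (hP (a, b)).1 (h b List.mem_cons_self)
      refine ⟨max m n, List.forall_mem_cons.2 ⟨mp _ _ _ (le_max_right _ _) hn, fun c hc => ?_⟩⟩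
      exact mp _ _ _ (le_max_left _ _) (hm c hc)
  · rintro ⟨m, hm⟩ b hb
    exact (hP (a, b)).2 ⟨m, hm b hb⟩

theorem S1.bex {P : α → β → Prop} {L : α → List β} (hP : S1 Y fun x : α × β => P x.1 x.2)
    (hL : Primrec L) : S1 Y fun a => ∃ b ∈ L a, P a b :=
  S1.ex ((S1.of_primrec (by fun_prop : PrimrecPred fun x : α × β => x.2 ∈ L x.1)).and hP)

theorem D1.of_iff {P Q : α → Prop} (hP : D1 Y P) (h : ∀ a, Q a ↔ P a) : D1 Y Q :=
  ⟨hP.1.of_iff h, hP.2.of_iff fun a => not_congr (h a)⟩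

theorem D1.not {P : α → Prop} (hP : D1 Y P) : D1 Y fun a => ¬ P a :=
  ⟨hP.2, hP.1.of_iff fun _ => not_not⟩

theorem D1.of_primrec {P : α → Prop} (hP : PrimrecPred P) : D1 Y P :=
  ⟨.of_primrec hP, .of_primrec hP.not⟩

theorem D1.comp {P : β → Prop} {g : α → β} (hP : D1 Y P) (hg : Primrec g) :
    D1 Y fun a => P (g a) := ⟨hP.1.comp hg, hP.2.comp hg⟩

theorem D1.and {P Q : α → Prop} (hP : D1 Y P) (hQ : D1 Y Q) : D1 Y fun a => P a ∧ Q a :=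
  ⟨hP.1.and hQ.1, (hP.2.or hQ.2).of_iff fun _ => not_and_or⟩

theorem D1.or {P Q : α → Prop} (hP : D1 Y P) (hQ : D1 Y Q) : D1 Y fun a => P a ∨ Q a :=
  ⟨hP.1.or hQ.1, (hP.2.and hQ.2).of_iff fun _ => not_or⟩

theorem D1.imp {P Q : α → Prop} (hP : D1 Y P) (hQ : D1 Y Q) : D1 Y fun a => P a → Q a :=
  (hP.not.or hQ).of_iff fun _ => imp_iff_not_or

theorem D1.ball {P : α → β → Prop} {L : α → List β} (hP : D1 Y fun x : α × β => P x.1 x.2)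
    (hL : Primrec L) : D1 Y fun a => ∀ b ∈ L a, P a b :=
  ⟨hP.1.ball hL, (hP.2.bex hL).of_iff fun a => by push Not; rfl⟩

theorem D1.bex {P : α → β → Prop} {L : α → List β} (hP : D1 Y fun x : α × β => P x.1 x.2)
    (hL : Primrec L) : D1 Y fun a => ∃ b ∈ L a, P a b :=
  ⟨hP.1.bex hL, (hP.2.ball hL).of_iff fun a => by push Not; rfl⟩

theorem S1_mem (Z : Set ℕ) : S1 Z fun n : ℕ => n ∈ Z := by
  refine ⟨fun q => q.2[q.1]? = some 1, by fun_prop, fun n => ⟨fun h => ⟨n + 1, ?_⟩, ?_⟩⟩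
  · simp [pre_getElem?, h]
  · rintro ⟨m, h⟩
    by_contra hn
    simp [pre_getElem?, hn] at h

theorem S1_notMem (Z : Set ℕ) : S1 Z fun n : ℕ => ¬ n ∈ Z := by
  refine ⟨fun q => q.2[q.1]? = some 0, by fun_prop, fun n => ⟨fun h => ⟨n + 1, ?_⟩, ?_⟩⟩
  · simp [pre_getElem?, h]
  · rintro ⟨m, h⟩ hn
    simp [pre_getElem?, hn] at h

theorem D1_mem (Z : Set ℕ) : D1 Z fun n : ℕ => n ∈ Z := ⟨S1_mem Z, S1_notMem Z⟩

/-! ### Oracle codes from primitive recursive tests -/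

theorem exists_code_of_primrec (O : ℕ →. ℕ) {f : ℕ → ℕ} (hf : Nat.Primrec f) :
    ∃ c : OCode, ∀ n, c.eval O n = Part.some (f n) := by
  induction hf with
  | zero => exact ⟨.zero, fun _ => rfl⟩
  | succ => exact ⟨.succ, fun _ => rfl⟩
  | left => exact ⟨.left, fun _ => rfl⟩
  | right => exact ⟨.right, fun _ => rfl⟩
  | pair _ _ ihf ihg =>
    obtain ⟨c, hc⟩ := ihf
    obtain ⟨d, hd⟩ := ihg
    refine ⟨.pair c d, fun n => Part.eq_some_iff.2 (mem_eval_pair.2 ⟨_, ?_, _, ?_, rfl⟩)⟩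
    · rw [hc]; exact Part.mem_some _
    · rw [hd]; exact Part.mem_some _
  | @comp f g _ _ ihf ihg =>
    obtain ⟨c, hc⟩ := ihf
    obtain ⟨d, hd⟩ := ihg
    refine ⟨.comp c d, fun n => Part.eq_some_iff.2 (mem_eval_comp.2 ⟨g n, ?_, ?_⟩)⟩
    · rw [hd]; exact Part.mem_some _
    · rw [hc]; exact Part.mem_some _
  | @prec f g _ _ ihf ihg =>
    obtain ⟨c, hc⟩ := ihf
    obtain ⟨d, hd⟩ := ihg
    have key : ∀ m k, (OCode.prec c d).eval O (Nat.pair m k) =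
        Part.some (Nat.rec (f m) (fun y ih => g (Nat.pair m (Nat.pair y ih))) k) := by
      intro m k
      refine Part.eq_some_iff.2 ?_
      induction k with
      | zero => rw [eval_prec_zero, hc]; exact Part.mem_some _
      | succ k ih => exact mem_eval_prec_succ.2 ⟨_, ih, by rw [hd]; exact Part.mem_some _⟩
    refine ⟨.prec c d, fun n => ?_⟩
    conv_lhs => rw [← Nat.pair_unpair n]
    rw [key]

/-- The prefixes of `Y` are computable from `Y`. -/
theorem exists_code_pre (Y : Set ℕ) :
    ∃ c : OCode, ∀ n, c.eval (chOracle Y) n = Part.some (Encodable.encode (pre Y n)) := by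
  have happ : Primrec fun k : ℕ =>
      Encodable.encode (((Encodable.decode k.unpair.1 : Option (List ℕ)).map
        fun σ => σ ++ [k.unpair.2]).getD []) :=
    pr_encode (Primrec.option_getD.comp (by fun_prop) (Primrec.const _))
  obtain ⟨a, ha⟩ := exists_code_of_primrec (chOracle Y) (Primrec.nat_iff.1 happ)
  obtain ⟨z, hz⟩ := exists_code_of_primrec (chOracle Y)
    (Nat.Primrec.const (Encodable.encode ([] : List ℕ)))
  obtain ⟨i, hi⟩ := exists_code_of_primrec (chOracle Y)
    (Primrec.nat_iff.1 (by fun_prop : Primrec fun n : ℕ => Nat.pair 0 n))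
  refine ⟨.comp (.prec z (.comp a (.pair (.comp .right .right)
    (.comp .oracle (.comp .left .right))))) i, fun n => Part.eq_some_iff.2 ?_⟩
  refine mem_eval_comp.2 ⟨Nat.pair 0 n, by rw [hi]; exact Part.mem_some _, ?_⟩
  induction n with
  | zero => rw [eval_prec_zero, hz]; exact Part.mem_some _
  | succ n ih =>
    refine mem_eval_prec_succ.2 ⟨_, ih, mem_eval_comp.2
      ⟨Nat.pair (Encodable.encode (pre Y n)) (if n ∈ Y then 1 else 0), mem_eval_pair.2
        ⟨_, mem_eval_comp.2 ⟨Nat.pair n (Encodable.encode (pre Y n)), ?_, ?_⟩, _,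
          mem_eval_comp.2 ⟨n, mem_eval_comp.2
            ⟨Nat.pair n (Encodable.encode (pre Y n)), ?_, ?_⟩, ?_⟩, rfl⟩, ?_⟩⟩
    · simp [OCode.eval]
    · simp [OCode.eval]
    · simp [OCode.eval]
    · simp [OCode.eval]
    · exact Part.mem_some _
    · rw [ha, Part.mem_some_iff]
      simp [pre, List.range_succ]

/-- A code searching for a prefix of `Y` that passes a primitive recursive test. -/
theorem exists_code_search (Y : Set ℕ) {p : ℕ × List ℕ → Prop} (hp : PrimrecPred p) :
    ∃ c : OCode, ∀ n, (∀ v ∈ c.eval (chOracle Y) n, p (n, pre Y v)) ∧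
      ((∃ m, p (n, pre Y m)) → (c.eval (chOracle Y) n).Dom) := by
  have ht : Primrec fun k : ℕ =>
      if ∃ σ ∈ (Encodable.decode k.unpair.2 : Option (List ℕ)).toList, p (k.unpair.1, σ) then 0
      else 1 := by
    have h : PrimrecPred fun k : ℕ =>
        ∃ σ ∈ (Encodable.decode k.unpair.2 : Option (List ℕ)).toList, p (k.unpair.1, σ) := by
      fun_prop
    fun_prop
  obtain ⟨t, ht⟩ := exists_code_of_primrec (chOracle Y) (Primrec.nat_iff.1 ht)
  obtain ⟨r, hr⟩ := exists_code_pre Y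
  have key : ∀ n m v, v ∈ (OCode.comp t (.pair .left (.comp r .right))).eval (chOracle Y)
      (Nat.pair n m) ↔ v = if p (n, pre Y m) then 0 else 1 := by
    intro n m v
    have h1 : (OCode.pair .left (.comp r .right)).eval (chOracle Y) (Nat.pair n m) =
        Part.some (Nat.pair n (Encodable.encode (pre Y m))) := by
      refine Part.eq_some_iff.2 (mem_eval_pair.2 ⟨n, by simp [OCode.eval], _,
        mem_eval_comp.2 ⟨m, by simp [OCode.eval], ?_⟩, rfl⟩)
      rw [hr]; exact Part.mem_some _
    rw [mem_eval_comp, h1]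
    simp [ht]
  refine ⟨.rfind' (.comp t (.pair .left (.comp r .right))), fun n => ⟨fun v hv => ?_, ?_⟩⟩
  · rw [mem_eval_rfind, key] at hv
    by_contra h
    simp [h] at hv
  · intro h
    refine Part.dom_iff_mem.2 ⟨Nat.find h, mem_eval_rfind.2 ⟨?_, fun j hj => ⟨1, ?_, by simp⟩⟩⟩
    · rw [key, if_pos (Nat.find_spec h)]
    · rw [key, if_neg (Nat.find_min h hj)]

/-- The oracle code of the constant function `n`. -/
def constC : ℕ → OCode
  | 0 => .zero
  | n + 1 => .comp .succ (constC n)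

theorem eval_constC (O : ℕ →. ℕ) (n m : ℕ) : (constC n).eval O m = Part.some n := by
  induction n with
  | zero => rfl
  | succ n ih =>
    exact Part.eq_some_iff.2 (mem_eval_comp.2 ⟨n, by rw [ih]; exact Part.mem_some _,
      Part.mem_some _⟩)

theorem primrec_constC : Primrec fun n => (constC n).encodeC :=
  (Primrec.nat_rec₁ (f := fun _ y => Nat.pair 6 (Nat.pair (Nat.pair 1 0) y)) (Nat.pair 0 0)
    (by unfold Primrec₂; fun_prop)).of_eq fun n => by
      induction n with
      | zero => rfl
      | succ n ih => simp only [ih]; rfl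

/-- Σ⁰₁ questions about `Y` are many-one reducible to the jump of `Y`. -/
theorem S1.reduce {P : α → Prop} (hP : S1 Y P) :
    ∃ r : α → ℕ, Primrec r ∧ ∀ a, P a ↔ r a ∈ jumpSet Y := by
  obtain ⟨p, hp, hP⟩ := hP
  have hq : PrimrecPred fun x : ℕ × List ℕ =>
      ∃ a ∈ (Encodable.decode x.1 : Option α).toList, p (a, x.2) := by
    fun_prop
  obtain ⟨c, hc⟩ := exists_code_search Y hq
  refine ⟨fun a => (OCode.comp c (constC (Encodable.encode a))).encodeC, ?_, fun a => ?_⟩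
  · have h : Primrec fun a : α => (constC (Encodable.encode a)).encodeC :=
      primrec_constC.comp Primrec.encode
    simp only [OCode.encodeC]
    fun_prop
  · have h1 : ∀ e, (OCode.comp c (constC (Encodable.encode a))).eval (chOracle Y) e =
        c.eval (chOracle Y) (Encodable.encode a) := by
      intro e
      ext v
      rw [mem_eval_comp, eval_constC]
      simp
    have h2 := hc (Encodable.encode a)
    simp only [Encodable.encodek, Option.toList_some, List.mem_singleton, exists_eq_left] at h2
    rw [hP, mem_jumpSet]
    constructor
    · exact fun h => ⟨_, rfl, by rw [h1]; exact h2.2 h⟩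
    · rintro ⟨d, hd, h⟩
      rw [encodeC_injective hd, h1, Part.dom_iff_mem] at h
      obtain ⟨v, hv⟩ := h
      exact ⟨v, h2.1 v hv⟩

theorem S1.jump {P : α → Prop} (hP : S1 Y P) : D1 (jumpSet Y) P := by
  obtain ⟨r, hr, h⟩ := hP.reduce
  exact ((D1_mem _).comp hr).of_iff h

/-- Post's theorem: a set that is Σ⁰₁ and co-Σ⁰₁ relative to `Y` is computable from `Y`. -/
theorem setLEset_of_D1 {A : Set ℕ} (h : D1 Y fun n => n ∈ A) : setLEset A Y := by
  obtain ⟨⟨p, hp, h⟩, q, hq, h'⟩ := h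
  obtain ⟨c, hc⟩ := exists_code_search Y (hp.or hq)
  have ht : Primrec fun k : ℕ =>
      if ∃ σ ∈ (Encodable.decode k.unpair.2 : Option (List ℕ)).toList, p (k.unpair.1, σ) then 1
      else 0 := by
    have h : PrimrecPred fun k : ℕ =>
        ∃ σ ∈ (Encodable.decode k.unpair.2 : Option (List ℕ)).toList, p (k.unpair.1, σ) := by
      fun_prop
    fun_prop
  obtain ⟨t, ht⟩ := exists_code_of_primrec (chOracle Y) (Primrec.nat_iff.1 ht)
  obtain ⟨r, hr⟩ := exists_code_pre Y
  obtain ⟨i, hi⟩ := exists_code_of_primrec (chOracle Y) Nat.Primrec.id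
  refine ⟨.comp t (.pair i (.comp r c)), funext fun n => Part.eq_some_iff.2 ?_⟩
  obtain ⟨v, hv⟩ := Part.dom_iff_mem.1 ((hc n).2 (by
    by_cases hn : n ∈ A
    · obtain ⟨m, hm⟩ := (h n).1 hn; exact ⟨m, .inl hm⟩
    · obtain ⟨m, hm⟩ := (h' n).1 hn; exact ⟨m, .inr hm⟩))
  refine mem_eval_comp.2 ⟨Nat.pair n (Encodable.encode (pre Y v)), mem_eval_pair.2
    ⟨n, by simp [hi], Encodable.encode (pre Y v), mem_eval_comp.2 ⟨v, hv, ?_⟩, rfl⟩, ?_⟩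
  · rw [hr]; exact Part.mem_some _
  · have h3 : p (n, pre Y v) ↔ n ∈ A := by
      refine ⟨fun h1 => (h n).2 ⟨v, h1⟩, fun hn => ?_⟩
      rcases (hc n).1 v hv with h4 | h4
      · exact h4
      · exact absurd hn ((h' n).2 ⟨v, h4⟩)
    simp [ht, h3]

/-- The graph of a function computable from `Y` is Σ⁰₁ relative to `Y`. -/
theorem S1_of_RecIn {g : ℕ →. ℕ} (hg : RecIn (chOracle Y) g) :
    S1 Y fun x : ℕ × ℕ => x.2 ∈ g x.1 := by
  obtain ⟨c, rfl⟩ := hg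
  refine ⟨fun q => ∃ k < q.2.length + 1,
    ((trans (q.2.take k) c.encodeC).bind fun d => Nat.Partrec.Code.evaln q.2.length d q.1.1) =
      some q.1.2, by fun_prop, fun ⟨n, v⟩ => ?_⟩
  simp only [mem_eval_iff, trans, dec_encodeC, Option.map_some, Option.bind_some, length_pre]
  constructor
  · rintro ⟨m, hv⟩
    rw [← eval_transC, Nat.Partrec.Code.evaln_complete] at hv
    obtain ⟨k, hk⟩ := hv
    refine ⟨max m k, m, by omega, ?_⟩
    rw [pre_take _ (le_max_left _ _)]
    exact Nat.Partrec.Code.evaln_mono (le_max_right _ _) hk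
  · rintro ⟨m, k, hk, hv⟩
    rw [pre_take _ (by omega)] at hv
    refine ⟨k, ?_⟩
    rw [← eval_transC]
    exact Nat.Partrec.Code.evaln_sound hv

end Sigma

/-! ### Bushy trees -/

section Bushy

/-- At least `k * (|ρ| + 1)` one-element extensions of `ρ` lie in `T` and in `B`. Strings are lists
with the newest element at the head. -/
def Many (T : List ℕ → Prop) (k : ℕ) (B : List ℕ → Prop) (ρ : List ℕ) : Prop :=
  ∃ l : List ℕ, l.Nodup ∧ k * (ρ.length + 1) ≤ l.length ∧ ∀ s ∈ l, T (s :: ρ) ∧ B (s :: ρ)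

/-- The set `B` of strings is `k`-closed: it contains every string with many extensions in it. -/
def Closed (T : List ℕ → Prop) (k : ℕ) (B : List ℕ → Prop) : Prop := ∀ ρ, Many T k B ρ → B ρ

/-- The set `A` is `k`-big above `τ`: a finite tree `w` above `τ` (given as a list of strings) has
all its leaves in `A`, and each of its other nodes has many children. -/
def Big (T : List ℕ → Prop) (k : ℕ) (A : List ℕ → Prop) (τ : List ℕ) : Prop :=
  ∃ w : List (List ℕ), τ ∈ w ∧ ∀ ρ ∈ w, A ρ ∨ Many T k (fun ρ' => ρ' ∈ w) ρ

variable {T A B : List ℕ → Prop} {k k' : ℕ}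

theorem Many.mono {ρ : List ℕ} (h : Many T k A ρ) (hAB : ∀ τ, A τ → B τ) : Many T k B ρ := by
  obtain ⟨l, h1, h2, h3⟩ := h
  exact ⟨l, h1, h2, fun s hs => ⟨(h3 s hs).1, hAB _ (h3 s hs).2⟩⟩

theorem Big.of_mem {ρ : List ℕ} (h : A ρ) : Big T k A ρ :=
  ⟨[ρ], by simp, fun τ hτ => .inl (by rw [List.mem_singleton.1 hτ]; exact h)⟩

theorem closed_big : Closed T k (Big T k A) := by
  rintro ρ ⟨l, h1, h2, h3⟩
  have : ∀ s, ∃ w : List (List ℕ), s ∈ l → s :: ρ ∈ w ∧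
      ∀ ρ ∈ w, A ρ ∨ Many T k (fun ρ' => ρ' ∈ w) ρ := by
    intro s
    by_cases hs : s ∈ l
    · obtain ⟨w, hw⟩ := (h3 s hs).2
      exact ⟨w, fun _ => hw⟩
    · exact ⟨[], fun h => absurd h hs⟩
  choose w hw using this
  refine ⟨ρ :: l.flatMap w, List.mem_cons_self, fun τ hτ => ?_⟩
  rcases List.mem_cons.1 hτ with rfl | hτ
  · exact .inr ⟨l, h1, h2, fun s hs => ⟨(h3 s hs).1, List.mem_cons_of_mem _
      (List.mem_flatMap.2 ⟨s, hs, (hw s hs).1⟩)⟩⟩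
  · obtain ⟨s, hs, hτ⟩ := List.mem_flatMap.1 hτ
    exact ((hw s hs).2 τ hτ).imp_right fun h => h.mono fun τ' h' => List.mem_cons_of_mem _
      (List.mem_flatMap.2 ⟨s, hs, h'⟩)

/-- The union of a `k`-closed set and a `k'`-closed set is `k + k'`-closed: if many extensions lie
in the union, then proportionally many lie in one of the two sets. -/
theorem Closed.or (hA : Closed T k A) (hB : Closed T k' B) :
    Closed T (k + k') fun ρ => A ρ ∨ B ρ := by
  rintro ρ ⟨l, h1, h2, h3⟩
  have hlen := List.length_eq_length_filter_add (l := l) fun s => decide (A (s :: ρ))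
  rw [add_mul] at h2
  by_cases hk : k * (ρ.length + 1) ≤ (l.filter fun s => decide (A (s :: ρ))).length
  · refine .inl (hA ρ ⟨_, h1.filter _, hk, fun s hs => ?_⟩)
    simp only [List.mem_filter, decide_eq_true_eq] at hs
    exact ⟨(h3 s hs.1).1, hs.2⟩
  · refine .inr (hB ρ ⟨_, h1.filter (fun s => !decide (A (s :: ρ))), by omega, fun s hs => ?_⟩)
    simp only [List.mem_filter, Bool.not_eq_true', decide_eq_false_iff_not] at hs
    exact ⟨(h3 s hs.1).1, (h3 s hs.1).2.resolve_left hs.2⟩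

/-- If `A` is `k`-big above `σ`, it meets the complement of any `k`-closed set that omits `σ`. -/
theorem Big.exists_not {σ : List ℕ} (hA : Big T k A σ) (hB : Closed T k B) (hT : T σ)
    (hσ : ¬ B σ) : ∃ τ, σ <:+ τ ∧ T τ ∧ A τ ∧ ¬ B τ := by
  obtain ⟨w, hσw, hw⟩ := hA
  obtain ⟨M, hM⟩ : ∃ M, ∀ ρ ∈ w, ρ.length < M :=
    ⟨(w.map List.length).sum + 1, fun ρ hρ => Nat.lt_succ_of_le
      (List.single_le_sum (by simp) _ (List.mem_map_of_mem hρ))⟩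
  obtain ⟨d, hd⟩ : ∃ d, M - σ.length = d := ⟨_, rfl⟩
  induction d generalizing σ with
  | zero => have := hM σ hσw; omega
  | succ d ih =>
    rcases hw σ hσw with h | ⟨l, h1, h2, h3⟩
    · exact ⟨σ, List.suffix_rfl, hT, h, hσ⟩
    · obtain ⟨s, hs, hBs⟩ : ∃ s ∈ l, ¬ B (s :: σ) := by
        by_contra! h
        exact hσ (hB σ ⟨l, h1, h2, fun s hs => ⟨(h3 s hs).1, h s hs⟩⟩)
      obtain ⟨τ, h4, h5⟩ := ih (h3 s hs).1 hBs (h3 s hs).2 (by rw [List.length_cons]; omega)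
      exact ⟨τ, (List.suffix_cons s σ).trans h4, h5⟩

/-- A string outside a closed set, almost all of whose one-element extensions are in `T`, has such
an extension outside the closed set. -/
theorem Closed.exists_cons {σ : List ℕ} (hB : Closed T k B) (hσ : ¬ B σ)
    (hT : ∀ᶠ s in atTop, T (s :: σ)) : ∃ s, T (s :: σ) ∧ ¬ B (s :: σ) := by
  obtain ⟨a, ha⟩ := eventually_atTop.1 hT
  by_contra! h
  refine hσ (hB σ ⟨List.range' a (k * (σ.length + 1)), List.nodup_range', by simp, ?_⟩)
  intro s hs
  have hs := ha s (List.left_le_of_mem_range' hs)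
  exact ⟨hs, h s hs⟩

end Bushy

/-! ### Rainbows -/

section Coloring

/-- The two numbers eventually give the same colors. -/
def Eqv (f : ℕ → ℕ → ℕ) (x y : ℕ) : Prop := ∀ᶠ s in atTop, f x s = f y s

/-- Strictly increasing finite rainbows, listed from the largest element to the smallest. -/
def RT (f : ℕ → ℕ → ℕ) (ρ : List ℕ) : Prop :=
  ρ.Pairwise (fun x y => y < x) ∧
    ∀ x ∈ ρ, ∀ y ∈ ρ, ∀ x' ∈ ρ, ∀ y' ∈ ρ, x < y → x' < y' → f x y = f x' y' → x = x' ∧ y = y'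

/-- Strings containing two distinct equivalent numbers; these do not extend to infinite
rainbows. -/
def B0 (f : ℕ → ℕ → ℕ) (ρ : List ℕ) : Prop := ∃ x ∈ ρ, ∃ y ∈ ρ, x ≠ y ∧ Eqv f x y

variable {f : ℕ → ℕ → ℕ}

theorem Eqv.symm {x y : ℕ} (h : Eqv f x y) : Eqv f y x := Eventually.mono h fun _ h => h.symm

/-- Two-boundedness leaves at most two elements in each class of `Eqv`. -/
theorem not_three (h2b : ∀ c : ℕ, {p : ℕ × ℕ | p.1 < p.2 ∧ f p.1 p.2 = c}.encard ≤ 2) {x y z : ℕ}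
    (hxy : x ≠ y) (hxz : x ≠ z) (hyz : y ≠ z) (h1 : Eqv f x z) (h2 : Eqv f y z) : False := by
  obtain ⟨t, ⟨⟨h1, h2⟩, h3⟩, h4, h5⟩ := ((Eventually.and h1 h2).and (eventually_gt_atTop x)
    |>.and ((eventually_gt_atTop y).and (eventually_gt_atTop z))).exists
  have hsub : ({(x, t), (y, t), (z, t)} : Set (ℕ × ℕ)) ⊆
      {p : ℕ × ℕ | p.1 < p.2 ∧ f p.1 p.2 = f z t} := by
    rintro p (rfl | rfl | rfl)
    · exact ⟨h3, h1⟩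
    · exact ⟨h4, h2⟩
    · exact ⟨h5, rfl⟩
  have h3 := (Set.encard_le_encard hsub).trans (h2b _)
  rw [Set.encard_insert_of_notMem (by simp [hxy, hxz]), Set.encard_insert_of_notMem
    (by simp [hyz]), Set.encard_singleton] at h3
  exact absurd h3 (by decide)

/-- If `ρ` has no two equivalent elements, each bad one-element extension `s :: ρ` yields an element
of `ρ` equivalent to `s`, and distinct `s` yield distinct elements. -/
theorem closed_B0 (h2b : ∀ c : ℕ, {p : ℕ × ℕ | p.1 < p.2 ∧ f p.1 p.2 = c}.encard ≤ 2)
    (T : List ℕ → Prop) : Closed T 1 (B0 f) := by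
  rintro ρ ⟨l, h1, h2, h3⟩
  by_contra hρ
  have key : ∀ s ∈ l, ∃ x ∈ ρ, s ≠ x ∧ Eqv f s x := by
    intro s hs
    obtain ⟨x, hx, y, hy, hxy, h⟩ := (h3 s hs).2
    rcases List.mem_cons.1 hx with rfl | hx1 <;> rcases List.mem_cons.1 hy with rfl | hy1
    · exact absurd rfl hxy
    · exact ⟨y, hy1, hxy, h⟩
    · exact ⟨x, hx1, hxy.symm, h.symm⟩
    · exact absurd ⟨x, hx1, y, hy1, hxy, h⟩ hρ
  choose! g hg using key
  have hcard : ρ.toFinset.card < l.toFinset.card := by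
    rw [List.toFinset_card_of_nodup h1]
    have := List.toFinset_card_le ρ
    omega
  obtain ⟨s, hs, t, ht, hst, h⟩ := Finset.exists_ne_map_eq_of_card_lt_of_maps_to hcard
    (f := g) fun s hs => by simpa using (hg s (by simpa using hs)).1
  simp only [List.mem_toFinset] at hs ht
  have hs := hg s hs
  have ht := hg t ht
  rw [← h] at ht
  exact not_three h2b hst hs.2.1 ht.2.1 hs.2.2 ht.2.2

/-- A new large element `s` creates no repeated color with an old pair, since color classes are
finite, nor between two new pairs `(x, s)` and `(y, s)`, since inequivalent `x` and `y` eventually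
give different colors. -/
theorem eventually_RT (h2b : ∀ c : ℕ, {p : ℕ × ℕ | p.1 < p.2 ∧ f p.1 p.2 = c}.encard ≤ 2)
    (hws : ∀ x y : ℕ, (∀ᶠ s in atTop, f x s = f y s) ∨ (∀ᶠ s in atTop, f x s ≠ f y s))
    {ρ : List ℕ} (hT : RT f ρ) (hB : ¬ B0 f ρ) : ∀ᶠ s in atTop, RT f (s :: ρ) := by
  have hfin : {x | x ∈ ρ}.Finite := List.finite_toSet ρ
  have h1 : ∀ᶠ s in atTop, ∀ x ∈ {x | x ∈ ρ}, x < s :=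
    (eventually_all_finite hfin).2 fun x _ => eventually_gt_atTop x
  have h2 : ∀ᶠ s in atTop, ∀ x ∈ {x | x ∈ ρ}, ∀ y ∈ {x | x ∈ ρ}, x ≠ y → f x s ≠ f y s := by
    refine (eventually_all_finite hfin).2 fun x hx => (eventually_all_finite hfin).2 fun y hy => ?_
    by_cases hxy : x = y
    · exact .of_forall fun s h => absurd hxy h
    · refine ((hws x y).resolve_left fun h => hB ⟨x, hx, y, hy, hxy, h⟩).mono fun s h _ => h
  have h3 : ∀ᶠ s in atTop, ∀ x ∈ {x | x ∈ ρ}, ∀ y ∈ {x | x ∈ ρ}, ∀ z ∈ {x | x ∈ ρ},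
      x < s → f x s ≠ f y z := by
    refine (eventually_all_finite hfin).2 fun x hx => (eventually_all_finite hfin).2 fun y hy =>
      (eventually_all_finite hfin).2 fun z hz => ?_
    have h := (Set.finite_of_encard_le_coe (h2b (f y z))).preimage
      (f := fun s => (x, s)) (fun a _ b _ h => (Prod.ext_iff.1 h).2)
    have h := h.eventually_cofinite_notMem
    rw [Nat.cofinite_eq_atTop] at h
    exact h.mono fun s hs hxs he => hs ⟨hxs, he⟩
  filter_upwards [h1, h2, h3] with s h1 h2 h3
  refine ⟨List.pairwise_cons.2 ⟨h1, hT.1⟩, ?_⟩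
  intro x hx y hy x' hx' y' hy' hxy hxy' h
  -- The smaller element of a pair is never the new element `s`.
  have hρ : ∀ {x y}, x ∈ s :: ρ → y ∈ s :: ρ → x < y → x ∈ ρ := by
    intro x y hx hy hxy
    rcases List.mem_cons.1 hx with rfl | hx
    · rcases List.mem_cons.1 hy with rfl | hy
      · exact absurd hxy (lt_irrefl _)
      · exact absurd hxy (h1 y hy).not_gt
    · exact hx
  replace hx := hρ hx hy hxy
  replace hx' := hρ hx' hy' hxy'
  rcases List.mem_cons.1 hy with rfl | hy1 <;> rcases List.mem_cons.1 hy' with rfl | hy1'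
  · exact ⟨by_contra fun hne => h2 x hx x' hx' hne h, rfl⟩
  · exact absurd h (h3 x hx x' hx' y' hy1' hxy)
  · exact absurd h.symm (h3 x' hx' x hx y hy1 hxy')
  · exact hT.2 x hx y hy1 x' hx' y' hy1' hxy hxy' h

end Coloring

/-! ### Deciding the jump along the construction -/

section Step

/-- The string `τ` forces the `e`-th computation to halt: some computation (tested by `D`) queries
only numbers of the join below `2 * max τ`, where every further extension agrees with `τ`. -/
def Cv (D : ℕ × List ℕ → Prop) (X : Set ℕ) (e : ℕ) (τ : List ℕ) : Prop :=
  ∃ m ≤ 2 * τ.headI, D (e, pre (joinSet {x | x ∈ τ} X) m)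

theorem pre_join_congr {X A B : Set ℕ} {h m : ℕ} (hm : m ≤ 2 * h)
    (hAB : ∀ x < h, x ∈ A ↔ x ∈ B) : pre (joinSet A X) m = pre (joinSet B X) m := by
  refine List.map_congr_left fun i hi => ?_
  have := hAB (i / 2) (by have := List.mem_range.1 hi; omega)
  have h : i ∈ joinSet A X ↔ i ∈ joinSet B X := by
    simp only [joinSet, Set.mem_ofPred_eq, this]
  simp only [h]

/-- The bad strings: those with two equivalent elements, and those above which a set of strings
promised to be avoided is big. -/
def Bad (f : ℕ → ℕ → ℕ) (D : ℕ × List ℕ → Prop) (X : Set ℕ) (N : List ℕ) (ρ : List ℕ) : Prop :=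
  B0 f ρ ∨ ∃ i ∈ N, Big (RT f) (2 ^ i) (Cv D X i) ρ

/-- States of the construction: a string and the list of indices forced out of the jump. -/
abbrev State := List ℕ × List ℕ

/-- Admissible steps: `b` properly extends `a`, avoids the bad strings, and decides whether `e` is
in the jump. -/
def Step (f : ℕ → ℕ → ℕ) (D : ℕ × List ℕ → Prop) (X : Set ℕ) (e : ℕ) (a b : State) : Prop :=
  (a.1 <:+ b.1 ∧ a.1.length < b.1.length) ∧ RT f b.1 ∧ ¬ Bad f D X b.2 b.1 ∧
    ((Big (RT f) (2 ^ e) (Cv D X e) a.1 ∧ Cv D X e b.1 ∧ b.2 = a.2) ∨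
      (¬ Big (RT f) (2 ^ e) (Cv D X e) a.1 ∧ b.2 = e :: a.2))

/-- The invariant of the construction before step `e`. Closedness with parameter `2 ^ e` leaves room
to declare the strings above which a `2 ^ e`-big set lies bad too, at the cost of doubling. -/
def Inv (f : ℕ → ℕ → ℕ) (D : ℕ × List ℕ → Prop) (X : Set ℕ) (e : ℕ) (a : State) : Prop :=
  RT f a.1 ∧ ¬ Bad f D X a.2 a.1 ∧ Closed (RT f) (2 ^ e) (Bad f D X a.2) ∧ e ≤ a.1.length ∧
    ∀ i ∈ a.2, i < e

variable {f : ℕ → ℕ → ℕ} {D : ℕ × List ℕ → Prop} {X : Set ℕ}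

theorem closed_bad_cons {e : ℕ} {N : List ℕ} (h : Closed (RT f) (2 ^ e) (Bad f D X N)) :
    Closed (RT f) (2 ^ (e + 1)) (Bad f D X (e :: N)) := by
  have h' := h.or (closed_big (T := RT f) (k := 2 ^ e) (A := Cv D X e))
  have heq : Bad f D X (e :: N) = fun ρ => Bad f D X N ρ ∨ Big (RT f) (2 ^ e) (Cv D X e) ρ := by
    funext ρ
    simp only [Bad, List.mem_cons, exists_eq_or_imp, eq_iff_iff]
    rw [← or_assoc, or_right_comm]
  rw [heq, pow_succ, mul_two]
  exact h'

theorem Closed.mono {T B : List ℕ → Prop} {k k' : ℕ} (h : Closed T k B) (hk : k ≤ k') :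
    Closed T k' B :=
  fun ρ ⟨l, h1, h2, h3⟩ => h ρ ⟨l, h1, (Nat.mul_le_mul_right _ hk).trans h2, h3⟩

theorem Inv.step {e : ℕ} {a b : State} (ha : Inv f D X e a) (h : Step f D X e a b) :
    Inv f D X (e + 1) b := by
  obtain ⟨-, -, h3, h4, h5⟩ := ha
  obtain ⟨⟨-, h7⟩, h8, h9, h10⟩ := h
  refine ⟨h8, h9, ?_, by omega, ?_⟩
  · rcases h10 with h10 | h10
    · rw [h10.2.2]
      exact h3.mono (Nat.pow_le_pow_right (by norm_num) e.le_succ)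
    · rw [h10.2]
      exact closed_bad_cons h3
  · rcases h10 with h10 | h10
    · rw [h10.2.2]
      exact fun i hi => (h5 i hi).trans e.lt_succ_self
    · rw [h10.2]
      intro i hi
      rcases List.mem_cons.1 hi with rfl | hi
      · exact i.lt_succ_self
      · exact (h5 i hi).trans e.lt_succ_self

theorem RT.le_headI {ρ : List ℕ} (h : RT f ρ) {x : ℕ} (hx : x ∈ ρ) : x ≤ ρ.headI := by
  cases ρ with
  | nil => simp at hx
  | cons s ρ =>
    rcases List.mem_cons.1 hx with rfl | hx
    · exact le_rfl
    · exact ((List.pairwise_cons.1 h.1).1 x hx).le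

theorem Cv.cons {e s : ℕ} {τ : List ℕ} (h : Cv D X e τ) (hT : RT f (s :: τ)) :
    Cv D X e (s :: τ) := by
  obtain ⟨m, hm, h⟩ := h
  have hs : τ.headI ≤ s := by
    cases τ with
    | nil => exact Nat.zero_le _
    | cons t τ => exact ((List.pairwise_cons.1 hT.1).1 t List.mem_cons_self).le
  refine ⟨m, hm.trans (Nat.mul_le_mul_left _ hs), ?_⟩
  rwa [pre_join_congr (B := {x | x ∈ τ}) hm]
  intro x hx
  simp only [Set.mem_ofPred_eq, List.mem_cons, or_iff_right_iff_imp]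
  omega

theorem exists_step (h2b : ∀ c : ℕ, {p : ℕ × ℕ | p.1 < p.2 ∧ f p.1 p.2 = c}.encard ≤ 2)
    (hws : ∀ x y : ℕ, (∀ᶠ s in atTop, f x s = f y s) ∨ (∀ᶠ s in atTop, f x s ≠ f y s))
    {e : ℕ} {a : State} (ha : Inv f D X e a) : ∃ b, Step f D X e a b := by
  obtain ⟨h1, h2, h3, -, -⟩ := ha
  have hext : ∀ {τ : List ℕ} {N k}, RT f τ → ¬ Bad f D X N τ → Closed (RT f) k (Bad f D X N) →
      ∃ s, RT f (s :: τ) ∧ ¬ Bad f D X N (s :: τ) := fun hτ hB hC =>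
    hC.exists_cons hB (eventually_RT h2b hws hτ fun h => hB (.inl h))
  by_cases hbig : Big (RT f) (2 ^ e) (Cv D X e) a.1
  · obtain ⟨τ, h4, h5, h6, h7⟩ := hbig.exists_not h3 h1 h2
    obtain ⟨s, h8, h9⟩ := hext h5 h7 h3
    refine ⟨(s :: τ, a.2), ⟨h4.trans (List.suffix_cons _ _), ?_⟩, h8, h9,
      .inl ⟨hbig, h6.cons h8, rfl⟩⟩
    exact Nat.lt_succ_of_le h4.length_le
  · have h4 : ¬ Bad f D X (e :: a.2) a.1 := by
      rintro (h | ⟨i, hi, h⟩)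
      · exact h2 (.inl h)
      · rcases List.mem_cons.1 hi with rfl | hi
        · exact hbig h
        · exact h2 (.inr ⟨i, hi, h⟩)
    obtain ⟨s, h8, h9⟩ := hext h1 h4 (closed_bad_cons h3)
    exact ⟨(s :: a.1, e :: a.2), ⟨List.suffix_cons _ _, Nat.lt_succ_self _⟩, h8, h9,
      .inr ⟨hbig, rfl⟩⟩

end Step

/-! ### Complexity of the construction -/

section Complexity

variable {α β : Type*} [Primcodable α] [Primcodable β]

theorem pairwise_iff_drop {r : ℕ → ℕ → Prop} (l : List ℕ) : l.Pairwise r ↔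
    ∀ i ∈ List.range l.length, ∀ x ∈ l[i]?.toList, ∀ y ∈ l.drop (i + 1), r x y := by
  induction l with
  | nil => simp
  | cons a l ih =>
    rw [List.pairwise_cons, ih, List.length_cons, List.range_succ_eq_map, List.forall_mem_cons,
      List.forall_mem_map]
    simp

@[fun_prop] theorem pr_nodup {f : α → List ℕ} (hf : Primrec f) :
    PrimrecPred fun a => (f a).Nodup :=
  (show PrimrecPred fun a => ∀ i ∈ List.range (f a).length, ∀ x ∈ (f a)[i]?.toList,
    ∀ y ∈ (f a).drop (i + 1), ¬ x = y by fun_prop).of_eq fun a => (pairwise_iff_drop _).symm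

@[fun_prop] theorem pr_decreasing {f : α → List ℕ} (hf : Primrec f) :
    PrimrecPred fun a => (f a).Pairwise fun x y => y < x :=
  (show PrimrecPred fun a => ∀ i ∈ List.range (f a).length, ∀ x ∈ (f a)[i]?.toList,
    ∀ y ∈ (f a).drop (i + 1), y < x by fun_prop).of_eq fun a => (pairwise_iff_drop _).symm

@[fun_prop] theorem pr_suffix {f g : α → List ℕ} (hf : Primrec f) (hg : Primrec g) :
    PrimrecPred fun a => f a <:+ g a :=
  (show PrimrecPred fun a => ∃ n < (g a).length + 1, (g a).drop n = f a by fun_prop).of_eq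
    fun a => by
      constructor
      · rintro ⟨n, -, h⟩
        exact h ▸ List.drop_suffix n _
      · rintro h
        exact ⟨(g a).length - (f a).length, by omega, (List.suffix_iff_eq_drop.1 h).symm⟩

variable {X : Set ℕ} {f : ℕ → ℕ → ℕ} {D : ℕ × List ℕ → Prop}

theorem D1_color_eq (hf : S1 X fun x : ℕ × ℕ => x.2 ∈ pairFnOracle f x.1) :
    D1 X fun q : (ℕ × ℕ) × (ℕ × ℕ) => f q.1.1 q.1.2 = f q.2.1 q.2.2 := by
  have h : S1 X fun q : (ℕ × ℕ) × ℕ => f q.1.1 q.1.2 = q.2 :=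
    (hf.comp (by fun_prop : Primrec fun q : (ℕ × ℕ) × ℕ => (Nat.pair q.1.1 q.1.2, q.2))).of_iff
      fun q => by simp [pairFnOracle, eq_comm]
  constructor
  · have h1 : S1 X fun q : (ℕ × ℕ) × (ℕ × ℕ) => ∃ v : ℕ, f q.1.1 q.1.2 = v ∧ f q.2.1 q.2.2 = v :=
      .ex (.and
        (h.comp (by fun_prop : Primrec fun x : ((ℕ × ℕ) × (ℕ × ℕ)) × ℕ => (x.1.1, x.2)))
        (h.comp (by fun_prop : Primrec fun x : ((ℕ × ℕ) × (ℕ × ℕ)) × ℕ => (x.1.2, x.2))))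
    exact h1.of_iff fun q => by simp [eq_comm]
  · have h1 : S1 X fun q : (ℕ × ℕ) × (ℕ × ℕ) => ∃ v : ℕ × ℕ,
        f q.1.1 q.1.2 = v.1 ∧ f q.2.1 q.2.2 = v.2 ∧ ¬ v.1 = v.2 :=
      .ex (.and
        (h.comp (by fun_prop : Primrec fun x : ((ℕ × ℕ) × (ℕ × ℕ)) × (ℕ × ℕ) => (x.1.1, x.2.1)))
        (.and
          (h.comp (by fun_prop : Primrec fun x : ((ℕ × ℕ) × (ℕ × ℕ)) × (ℕ × ℕ) => (x.1.2, x.2.2)))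
          (.of_primrec (by fun_prop))))
    exact h1.of_iff fun q => by simp

theorem D1_RT (hf : S1 X fun x : ℕ × ℕ => x.2 ∈ pairFnOracle f x.1) : D1 X (RT f) := by
  refine (D1.of_primrec (by fun_prop)).and (.ball (.ball (.ball (.ball
    (.imp (.of_primrec (by fun_prop)) (.imp (.of_primrec (by fun_prop)) (.imp ?_
      (.of_primrec (by fun_prop))))) ?_) ?_) ?_) ?_)
  · exact (D1_color_eq hf).comp
      (by fun_prop : Primrec fun x : (((List ℕ × ℕ) × ℕ) × ℕ) × ℕ =>
        ((x.1.1.1.2, x.1.1.2), (x.1.2, x.2)))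
  all_goals fun_prop

/-- Weak rainbow-stability makes equivalence decidable from the jump. -/
theorem D1_Eqv (hf : S1 X fun x : ℕ × ℕ => x.2 ∈ pairFnOracle f x.1)
    (hws : ∀ x y : ℕ, (∀ᶠ s in atTop, f x s = f y s) ∨ (∀ᶠ s in atTop, f x s ≠ f y s)) :
    D1 (jumpSet X) fun q : ℕ × ℕ => Eqv f q.1 q.2 := by
  have h : D1 X fun x : ((ℕ × ℕ) × ℕ) × ℕ => x.1.2 ≤ x.2 → f x.1.1.1 x.2 = f x.1.1.2 x.2 :=
    .imp (.of_primrec (by fun_prop)) ((D1_color_eq hf).comp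
      (by fun_prop : Primrec fun x : ((ℕ × ℕ) × ℕ) × ℕ => ((x.1.1.1, x.2), (x.1.1.2, x.2))))
  have h' : D1 X fun x : ((ℕ × ℕ) × ℕ) × ℕ => x.1.2 ≤ x.2 → f x.1.1.1 x.2 ≠ f x.1.1.2 x.2 :=
    .imp (.of_primrec (by fun_prop)) ((D1_color_eq hf).comp
      (by fun_prop : Primrec fun x : ((ℕ × ℕ) × ℕ) × ℕ => ((x.1.1.1, x.2), (x.1.1.2, x.2)))).not
  constructor
  · have h1 : S1 (jumpSet X) fun q : ℕ × ℕ =>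
        ∃ a : ℕ, ¬ ∃ s : ℕ, ¬ (a ≤ s → f q.1 s = f q.2 s) := .ex (S1.ex h.2).jump.2
    refine h1.of_iff fun q => ?_
    simp only [not_exists, not_not]
    exact eventually_atTop
  · have h1 : S1 (jumpSet X) fun q : ℕ × ℕ =>
        ∃ a : ℕ, ¬ ∃ s : ℕ, ¬ (a ≤ s → f q.1 s ≠ f q.2 s) := .ex (S1.ex h'.2).jump.2
    refine h1.of_iff fun q => ?_
    simp only [not_exists, not_not]
    rw [← eventually_atTop (p := fun s => f q.1 s ≠ f q.2 s)]
    refine ⟨(hws q.1 q.2).resolve_left, fun h1 h2 => ?_⟩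
    obtain ⟨s, h1, h2⟩ := (h1.and h2).exists
    exact h1 h2

theorem D1_B0 (hf : S1 X fun x : ℕ × ℕ => x.2 ∈ pairFnOracle f x.1)
    (hws : ∀ x y : ℕ, (∀ᶠ s in atTop, f x s = f y s) ∨ (∀ᶠ s in atTop, f x s ≠ f y s)) :
    D1 (jumpSet X) (B0 f) := by
  refine .bex (.bex (.and (.of_primrec (by fun_prop)) ?_) ?_) ?_
  · exact (D1_Eqv hf hws).comp (by fun_prop : Primrec fun x : (List ℕ × ℕ) × ℕ => (x.1.2, x.2))
  all_goals fun_prop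

theorem S1_Cv (hD : PrimrecPred D) : S1 X fun q : ℕ × List ℕ => Cv D X q.1 q.2 := by
  have key : ∀ (τ : List ℕ) (m k : ℕ), m ≤ k → ((List.range m).map fun i =>
      if i % 2 = 0 then (if i / 2 ∈ τ then 1 else 0) else ((pre X k)[i / 2]?).getD 0) =
        pre (joinSet {x | x ∈ τ} X) m := by
    intro τ m k hmk
    refine List.map_congr_left fun i hi => ?_
    have hi := List.mem_range.1 hi
    have hk : i / 2 < k := by omega
    rcases Nat.mod_two_eq_zero_or_one i with h | h
    · simp [joinSet, h]
    · simp [joinSet, h, pre, hk]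
  refine ⟨fun x => ∃ m < 2 * x.1.2.headI + 1, m ≤ x.2.length ∧ D (x.1.1, (List.range m).map fun i =>
    if i % 2 = 0 then (if i / 2 ∈ x.1.2 then 1 else 0) else (x.2[i / 2]?).getD 0), ?_,
    fun ⟨e, τ⟩ => ?_⟩
  · have h : Primrec fun y : ((((ℕ × List ℕ) × List ℕ) × ℕ) × ℕ) =>
        (y.1.1.2[y.2 / 2]?).getD 0 :=
      Primrec.option_getD.comp (by fun_prop) (Primrec.const 0)
    fun_prop
  · simp only [length_pre]
    constructor
    · rintro ⟨m, hm, h⟩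
      exact ⟨m, m, by omega, le_rfl, by rwa [key _ _ _ le_rfl]⟩
    · rintro ⟨k, m, hm, hmk, h⟩
      rw [key _ _ _ hmk] at h
      exact ⟨m, by omega, h⟩

theorem S1_Big (hf : S1 X fun x : ℕ × ℕ => x.2 ∈ pairFnOracle f x.1) (hD : PrimrecPred D) :
    S1 X fun q : ℕ × List ℕ => Big (RT f) (2 ^ q.1) (Cv D X q.1) q.2 := by
  refine S1.ex (β := List (List ℕ)) (.and (.of_primrec (by fun_prop)) (.ball (.or ?_ (.ex
    (β := List ℕ) (.and (.of_primrec (by fun_prop)) (.and (.of_primrec (by fun_prop)) (.ball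
      (.and ?_ (.of_primrec (by fun_prop))) ?_))))) ?_))
  · exact (S1_Cv hD).comp (by fun_prop : Primrec fun x : ((ℕ × List ℕ) × List (List ℕ)) × List ℕ =>
      (x.1.1.1, x.2))
  · exact (D1_RT hf).1.comp (by fun_prop : Primrec
      fun x : ((((ℕ × List ℕ) × List (List ℕ)) × List ℕ) × List ℕ) × ℕ => x.2 :: x.1.1.2)
  all_goals fun_prop

theorem D1_Bad (hf : S1 X fun x : ℕ × ℕ => x.2 ∈ pairFnOracle f x.1)
    (hws : ∀ x y : ℕ, (∀ᶠ s in atTop, f x s = f y s) ∨ (∀ᶠ s in atTop, f x s ≠ f y s))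
    (hD : PrimrecPred D) : D1 (jumpSet X) fun q : State => Bad f D X q.2 q.1 := by
  refine .or ((D1_B0 hf hws).comp Primrec.fst) (.bex ?_ Primrec.snd)
  exact (S1_Big hf hD).jump.comp (by fun_prop : Primrec fun x : State × ℕ => (x.2, x.1.1))

/-- A decidable set is decidable from the jump. -/
theorem D1.jump {Y : Set ℕ} {P : α → Prop} (h : D1 Y P) : D1 (jumpSet Y) P := h.1.jump

theorem D1_Step (hf : S1 X fun x : ℕ × ℕ => x.2 ∈ pairFnOracle f x.1)
    (hws : ∀ x y : ℕ, (∀ᶠ s in atTop, f x s = f y s) ∨ (∀ᶠ s in atTop, f x s ≠ f y s))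
    (hD : PrimrecPred D) :
    D1 (jumpSet X) fun q : (ℕ × State) × State => Step f D X q.1.1 q.1.2 q.2 := by
  have hbig := (S1_Big hf hD).jump.comp
    (by fun_prop : Primrec fun q : (ℕ × State) × State => (q.1.1, q.1.2.1))
  have hcv := (S1_Cv (X := X) hD).jump.comp
    (by fun_prop : Primrec fun q : (ℕ × State) × State => (q.1.1, q.2.1))
  refine (D1.of_primrec (by fun_prop)).and (.and ((D1_RT hf).jump.comp (by fun_prop))
    (.and ((D1_Bad hf hws hD).comp Primrec.snd).not (.or (hbig.and (hcv.and
      (.of_primrec (by fun_prop)))) (hbig.not.and (.of_primrec (by fun_prop))))))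

/-- The least admissible step, with respect to the codes of states. -/
def LeastStep (f : ℕ → ℕ → ℕ) (D : ℕ × List ℕ → Prop) (X : Set ℕ) (e : ℕ) (a b : State) : Prop :=
  Step f D X e a b ∧ ∀ n ∈ List.range (Encodable.encode b),
    ∀ c ∈ (Encodable.decode n : Option State).toList, ¬ Step f D X e a c

theorem D1_LeastStep (hf : S1 X fun x : ℕ × ℕ => x.2 ∈ pairFnOracle f x.1)
    (hws : ∀ x y : ℕ, (∀ᶠ s in atTop, f x s = f y s) ∨ (∀ᶠ s in atTop, f x s ≠ f y s))
    (hD : PrimrecPred D) :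
    D1 (jumpSet X) fun q : (ℕ × State) × State => LeastStep f D X q.1.1 q.1.2 q.2 := by
  have h := D1_Step hf hws hD
  refine h.and (.ball (.ball (h.comp (by fun_prop : Primrec
    fun x : (((ℕ × State) × State) × ℕ) × State => (x.1.1.1, x.2))).not ?_) ?_)
  all_goals fun_prop

theorem LeastStep.unique {e : ℕ} {a b c : State} (hb : LeastStep f D X e a b)
    (hc : LeastStep f D X e a c) : b = c := by
  have key : ∀ {b c : State}, LeastStep f D X e a b → LeastStep f D X e a c →
      ¬ Encodable.encode b < Encodable.encode c := fun hb hc hlt =>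
    hc.2 _ (List.mem_range.2 hlt) _ (Option.mem_toList.2 (Encodable.encodek _)) hb.1
  exact Encodable.encode_injective (le_antisymm (not_lt.1 (key hc hb)) (not_lt.1 (key hb hc)))

theorem exists_leastStep {e : ℕ} {a : State} (h : ∃ b, Step f D X e a b) :
    ∃ b, LeastStep f D X e a b := by
  have h' : ∃ n b, Encodable.encode b = n ∧ Step f D X e a b := by
    obtain ⟨b, hb⟩ := h
    exact ⟨_, b, rfl, hb⟩
  obtain ⟨b, hb, h1⟩ := Nat.find_spec h'
  refine ⟨b, h1, fun n hn c hc hs => ?_⟩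
  have hc : Encodable.encode c = n := by
    rw [Option.mem_toList, Denumerable.decode_eq_ofNat, Option.some_inj] at hc
    rw [← hc]
    exact Denumerable.encode_ofNat n
  refine Nat.find_min h' ?_ ⟨c, rfl, hs⟩
  have := List.mem_range.1 hn
  omega

/-- A sequence produced by a recursion with decidable steps has a Σ⁰₁ graph. -/
theorem S1_seq {Y : Set ℕ} {G : ℕ → α → α → Prop} {s : ℕ → α}
    (hG : S1 Y fun q : (ℕ × α) × α => G q.1.1 q.1.2 q.2) (hs : ∀ e, G e (s e) (s (e + 1)))
    (huniq : ∀ e a b c, G e a b → G e a c → b = c) : S1 Y fun q : ℕ × α => s q.1 = q.2 := by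
  have h : S1 Y fun q : ℕ × α => ∃ L : List α, L[0]? = some (s 0) ∧ L[q.1]? = some q.2 ∧
      ∀ i ∈ List.range q.1, ∃ a ∈ L[i]?.toList, ∃ b ∈ L[i + 1]?.toList, G i a b := by
    refine S1.ex (.and (.of_primrec (by fun_prop)) (.and (.of_primrec (by fun_prop)) (.ball
      (.bex (.bex (hG.comp (by fun_prop : Primrec
        fun x : ((((ℕ × α) × List α) × ℕ) × α) × α => ((x.1.1.2, x.1.2), x.2))) ?_) ?_) ?_)))
    all_goals fun_prop
  refine h.of_iff fun ⟨n, b⟩ => ⟨?_, ?_⟩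
  · intro hb
    obtain rfl : s n = b := hb
    refine ⟨(List.range (n + 1)).map s, by simp, by simp, fun i hi => ?_⟩
    have hi := List.mem_range.1 hi
    exact ⟨s i, by simp [hi.trans n.lt_succ_self], s (i + 1), by simp [hi], hs i⟩
  · rintro ⟨L, h0, hn, hL⟩
    have key : ∀ i ≤ n, L[i]? = some (s i) := by
      intro i
      induction i with
      | zero => exact fun _ => h0
      | succ i ih =>
        intro hi
        obtain ⟨a, ha, c, hc, h⟩ := hL i (List.mem_range.2 hi)
        rw [ih (by omega)] at ha
        obtain rfl : a = s i := by simpa using ha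
        rw [huniq _ _ _ _ (hs i) h]
        exact Option.mem_toList.1 hc
    have h1 := key n le_rfl
    simp only at hn
    rw [hn] at h1
    exact (Option.some.inj h1).symm

end Complexity

/-! ### The sequence of states and its rainbow -/

section Sequence

variable {f : ℕ → ℕ → ℕ} {D : ℕ × List ℕ → Prop} {X : Set ℕ}

theorem exists_seq (h2b : ∀ c : ℕ, {p : ℕ × ℕ | p.1 < p.2 ∧ f p.1 p.2 = c}.encard ≤ 2)
    (hws : ∀ x y : ℕ, (∀ᶠ s in atTop, f x s = f y s) ∨ (∀ᶠ s in atTop, f x s ≠ f y s)) :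
    ∃ s : ℕ → State, ∀ e, Inv f D X e (s e) ∧ LeastStep f D X e (s e) (s (e + 1)) := by
  have h0 : Inv f D X 0 ([], []) := by
    have hB : Bad f D X [] = B0 f := by funext ρ; simp [Bad]
    refine ⟨⟨List.Pairwise.nil, by simp⟩, by simp [hB, B0], ?_, le_rfl, by simp⟩
    rw [hB]
    exact closed_B0 h2b _
  have h1 : ∀ e (a : {a : State // Inv f D X e a}), ∃ b : {b : State // Inv f D X (e + 1) b},
      LeastStep f D X e a.1 b.1 := fun e a => by
    obtain ⟨b, hb⟩ := exists_leastStep (exists_step h2b hws a.2)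
    exact ⟨⟨b, a.2.step hb.1⟩, hb⟩
  choose g hg using h1
  let s : (e : ℕ) → {a : State // Inv f D X e a} := fun e =>
    Nat.rec (motive := fun e => {a : State // Inv f D X e a}) ⟨_, h0⟩ g e
  exact ⟨fun e => (s e).1, fun e => ⟨(s e).2, hg e (s e)⟩⟩

variable {s : ℕ → State}

/-- The set of all numbers listed by the strings of a sequence of states. -/
def limSet (s : ℕ → State) : Set ℕ := {x | ∃ e, x ∈ (s e).1}

theorem seq_suffix (hs : ∀ e, Inv f D X e (s e) ∧ LeastStep f D X e (s e) (s (e + 1)))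
    {i j : ℕ} (hij : i ≤ j) : (s i).1 <:+ (s j).1 := by
  induction j, hij using Nat.le_induction with
  | base => exact List.suffix_rfl
  | succ j _ ih => exact ih.trans (hs j).2.1.1.1

theorem seq_no (hs : ∀ e, Inv f D X e (s e) ∧ LeastStep f D X e (s e) (s (e + 1)))
    {e i j : ℕ} (hij : i ≤ j) (h : e ∈ (s i).2) : e ∈ (s j).2 := by
  induction j, hij using Nat.le_induction with
  | base => exact h
  | succ j _ ih =>
    rcases (hs j).2.1.2.2.2 with h1 | h1
    · rw [h1.2.2]; exact ih
    · rw [h1.2]; exact List.mem_cons_of_mem _ ih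

theorem exists_stage (hs : ∀ e, Inv f D X e (s e) ∧ LeastStep f D X e (s e) (s (e + 1)))
    {F : Finset ℕ} (hF : ∀ x ∈ F, x ∈ limSet s) : ∃ j, ∀ x ∈ F, x ∈ (s j).1 := by
  induction F using Finset.induction_on with
  | empty => exact ⟨0, by simp⟩
  | insert a F _ ih =>
    obtain ⟨j, hj⟩ := ih fun x hx => hF x (Finset.mem_insert_of_mem hx)
    obtain ⟨i, hi⟩ := hF a (Finset.mem_insert_self _ _)
    refine ⟨max i j, fun x hx => ?_⟩
    rcases Finset.mem_insert.1 hx with rfl | hx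
    · exact (seq_suffix hs (le_max_left i j)).subset hi
    · exact (seq_suffix hs (le_max_right i j)).subset (hj x hx)

theorem nodup_of_RT {ρ : List ℕ} (h : RT f ρ) : ρ.Nodup := h.1.imp fun h => h.ne'

/-- Later elements exceed the head, so the limit set agrees with each string below its head. -/
theorem mem_limSet_iff (hs : ∀ e, Inv f D X e (s e) ∧ LeastStep f D X e (s e) (s (e + 1)))
    {j x : ℕ} (hx : x < (s j).1.headI) : x ∈ limSet s ↔ x ∈ (s j).1 := by
  refine ⟨fun ⟨i, hi⟩ => ?_, fun h => ⟨j, h⟩⟩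
  have h1 := (seq_suffix hs (le_max_left i j)).subset hi
  obtain ⟨l, hl⟩ := seq_suffix hs (le_max_right i j)
  have hT := (hs (max i j)).1.1.1
  rw [← hl] at h1 hT
  rcases List.mem_append.1 h1 with h2 | h2
  · have hmem : (s j).1.headI ∈ (s j).1 := by
      generalize (s j).1 = ρ at hx
      cases ρ with
      | nil => simp at hx
      | cons t ρ => exact List.mem_cons_self
    have := (List.pairwise_append.1 hT).2.2 x h2 _ hmem
    omega
  · exact h2

theorem le_headI_seq (hs : ∀ e, Inv f D X e (s e) ∧ LeastStep f D X e (s e) (s (e + 1)))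
    (m : ℕ) : m ≤ (s (m + 1)).1.headI := by
  have hT := (hs (m + 1)).1
  have hsub : (s (m + 1)).1.toFinset ⊆ Finset.range ((s (m + 1)).1.headI + 1) := fun x hx =>
    Finset.mem_range.2 (Nat.lt_succ_of_le (hT.1.le_headI (by simpa using hx)))
  have h1 := Finset.card_le_card hsub
  rw [List.toFinset_card_of_nodup (nodup_of_RT hT.1), Finset.card_range] at h1
  have := hT.2.2.2.1
  omega

theorem limSet_infinite
    (hs : ∀ e, Inv f D X e (s e) ∧ LeastStep f D X e (s e) (s (e + 1))) :
    (limSet s).Infinite := by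
  intro hfin
  have hsub : (s (hfin.toFinset.card + 1)).1.toFinset ⊆ hfin.toFinset := fun x hx =>
    hfin.mem_toFinset.2 ⟨_, by simpa using hx⟩
  have h1 := Finset.card_le_card hsub
  rw [List.toFinset_card_of_nodup (nodup_of_RT (hs _).1.1)] at h1
  have := (hs (hfin.toFinset.card + 1)).1.2.2.2.1
  omega

/-- Step `e` decides the jump correctly. If `e` is put on the list, the set of strings forcing
convergence is never big again, so by `Big.of_mem` none of the later strings forces convergence. -/
theorem mem_jump_iff (hs : ∀ e, Inv f D X e (s e) ∧ LeastStep f D X e (s e) (s (e + 1)))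
    (hD : ∀ Y e, e ∈ jumpSet Y ↔ ∃ m, D (e, pre Y m)) (e : ℕ) :
    e ∈ jumpSet (joinSet (limSet s) X) ↔ ¬ e ∈ (s (e + 1)).2 := by
  have hpre : ∀ j m, m ≤ 2 * (s j).1.headI →
      pre (joinSet (limSet s) X) m = pre (joinSet {x | x ∈ (s j).1} X) m := fun j m hm =>
    pre_join_congr hm fun x hx => mem_limSet_iff hs hx
  constructor
  · intro h he
    obtain ⟨m, hm⟩ := (hD _ _).1 h
    have hj := le_headI_seq hs (max m e)
    have hmj : m ≤ 2 * (s (max m e + 1)).1.headI := by omega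
    rw [hpre _ m hmj] at hm
    refine (hs (max m e + 1)).1.2.1 (.inr ⟨e, seq_no hs (by omega) he, .of_mem ⟨m, hmj, hm⟩⟩)
  · intro he
    rcases (hs e).2.1.2.2.2 with h1 | h1
    · obtain ⟨m, hm, h⟩ := h1.2.1
      rw [← hpre _ m hm] at h
      exact (hD _ _).2 ⟨m, h⟩
    · rw [h1.2] at he
      exact absurd List.mem_cons_self he

end Sequence

end Rainbow

/-- Every `X`-computable 2-bounded weakly rainbow-stable coloring of pairs has
an infinite rainbow that is low over `X`. -/
theorem stmt19 (X : Set ℕ) (f : ℕ → ℕ → ℕ)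
    (hcomp : RecIn (chOracle X) (pairFnOracle f))
    (h2b : ∀ c : ℕ, {p : ℕ × ℕ | p.1 < p.2 ∧ f p.1 p.2 = c}.encard ≤ 2)
    (hws : ∀ x y : ℕ,
      (∀ᶠ s in atTop, f x s = f y s) ∨ (∀ᶠ s in atTop, f x s ≠ f y s)) :
    ∃ R : Set ℕ, R.Infinite ∧
      (∀ x ∈ R, ∀ y ∈ R, ∀ x' ∈ R, ∀ y' ∈ R, x < y → x' < y' →
        f x y = f x' y' → x = x' ∧ y = y') ∧
      setLEset (jumpSet (joinSet R X)) (jumpSet X) := by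
  obtain ⟨D, hDp, hD⟩ := Rainbow.jump_normal_form
  obtain ⟨s, hs⟩ := Rainbow.exists_seq (D := D) (X := X) h2b hws
  refine ⟨Rainbow.limSet s, Rainbow.limSet_infinite hs, ?_, Rainbow.setLEset_of_D1 ?_⟩
  · intro x hx y hy x' hx' y' hy' hxy hxy' h
    obtain ⟨j, hj⟩ := Rainbow.exists_stage hs (F := {x, y, x', y'}) (by simp [hx, hy, hx', hy'])
    simp only [Finset.mem_insert, Finset.mem_singleton, forall_eq_or_imp, forall_eq] at hj
    exact (hs j).1.1.2 x hj.1 y hj.2.1 x' hj.2.2.1 y' hj.2.2.2 hxy hxy' h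
  · have hG := Rainbow.D1_LeastStep (Rainbow.S1_of_RecIn hcomp) hws hDp
    have hgraph := Rainbow.S1_seq hG.1 (fun e => (hs e).2) fun e a b c =>
      Rainbow.LeastStep.unique
    have hgraph := hgraph.comp (by fun_prop : Primrec fun x : ℕ × Rainbow.State => (x.1 + 1, x.2))
    have hyes : Rainbow.S1 (jumpSet X) fun e : ℕ =>
        ∃ b : Rainbow.State, s (e + 1) = b ∧ ¬ e ∈ b.2 :=
      .ex (hgraph.and (.of_primrec (by fun_prop)))
    have hno : Rainbow.S1 (jumpSet X) fun e : ℕ =>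
        ∃ b : Rainbow.State, s (e + 1) = b ∧ e ∈ b.2 :=
      .ex (hgraph.and (.of_primrec (by fun_prop)))
    exact ⟨hyes.of_iff fun e => by simp [Rainbow.mem_jump_iff hs hD],
      hno.of_iff fun e => by simp [Rainbow.mem_jump_iff hs hD]⟩

end
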